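/- arXiv:2001.03033 — 2 statements merged into one kernel-verified Lean document; each statement's English description precedes it below -/
import Mathlib

section
/- Let A, B be real numbers with A + λ₁ < B ≤ 1, let m ≥ 3 be an integer, and let Δ be holomorphic on the closed strip Σ_{A,B} = {ζ ∈ ℂ : A ≤ Re ζ ≤ B} with ‖Δ‖_m := sup_{ζ∈Σ_{A,B}} |Δ(ζ)|·|ζ|^m < ∞. Then there exists a bounded holomorphic function φ on the closed strip Σ_{A,B+λ₁} = {ζ ∈ ℂ : A ≤ Re ζ ≤ B+λ₁} satisfying the difference equation φ(ζ+λ) − φ(ζ) = Δ(ζ) for all ζ ∈ Σ_{A,B}; moreover any two bounded holomorphic solutions on Σ_{A,B+λ₁} differ by an additive constant. -/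
open Complex

section aux
open MeasureTheory Filter Topology Set

lemma aux_integrable_sq (a : ℝ) (ha : a ≠ 0) : Integrable fun t : ℝ => (a ^ 2 + t ^ 2)⁻¹ := by
  have h := (integrable_inv_one_add_sq.comp_mul_left' (inv_ne_zero ha)).const_mul ((a ^ 2)⁻¹)
  refine h.congr (Eventually.of_forall fun t => ?_)
  simp only
  rw [← mul_inv]
  congr 1
  field_simp

lemma aux_integral_sq (a : ℝ) (ha : a ≠ 0) :
    ∫ t : ℝ, a * (a ^ 2 + t ^ 2)⁻¹ = a⁻¹ * |a| * Real.pi := by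
  have h : ∀ t : ℝ, a * (a ^ 2 + t ^ 2)⁻¹ = a⁻¹ * (1 + (a⁻¹ * t) ^ 2)⁻¹ := by
    intro t
    have : (1 + (a⁻¹ * t) ^ 2) = (a ^ 2 + t ^ 2) * (a ^ 2)⁻¹ := by field_simp
    rw [this, mul_inv, inv_inv]
    field_simp
  simp_rw [h]
  rw [integral_const_mul, Measure.integral_comp_mul_left (fun t : ℝ => (1 + t ^ 2)⁻¹),
    integral_univ_inv_one_add_sq]
  simp
  ring

lemma aux_ne (a t : ℝ) (ha : a ≠ 0) : (a : ℂ) + t * I ≠ 0 := by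
  intro h
  have := congrArg Complex.re h
  simp at this
  exact ha this

lemma aux_norm_sq (a t : ℝ) : ‖(a : ℂ) + t * I‖ ^ 2 = a ^ 2 + t ^ 2 := by
  rw [← Complex.normSq_eq_norm_sq, Complex.normSq_add_mul_I]

lemma aux_J_integrable (a b : ℝ) (ha : a ≠ 0) (hb : b ≠ 0) :
    Integrable fun t : ℝ => ((a : ℂ) + t * I)⁻¹ - ((b : ℂ) + t * I)⁻¹ := by
  have h := ((aux_integrable_sq a ha).add (aux_integrable_sq b hb)).const_mul |b - a|
  refine h.mono' ?_ (Eventually.of_forall fun t => ?_)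
  · apply Continuous.aestronglyMeasurable
    apply Continuous.sub
    · exact Continuous.inv₀ (by fun_prop) (fun t => aux_ne a t ha)
    · exact Continuous.inv₀ (by fun_prop) (fun t => aux_ne b t hb)
  · have e : ((a : ℂ) + t * I)⁻¹ - ((b : ℂ) + t * I)⁻¹
        = ((b - a : ℝ) : ℂ) * (((a : ℂ) + t * I)⁻¹ * ((b : ℂ) + t * I)⁻¹) := by
      have := aux_ne a t ha
      have := aux_ne b t hb
      field_simp
      push_cast
      ring
    rw [e, norm_mul, Complex.norm_real, Real.norm_eq_abs, norm_mul, norm_inv, norm_inv]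
    refine mul_le_mul_of_nonneg_left ?_ (abs_nonneg _)
    simp only [Pi.add_apply]
    rw [← aux_norm_sq a t, ← aux_norm_sq b t]
    set x := ‖(a : ℂ) + t * I‖⁻¹
    set y := ‖(b : ℂ) + t * I‖⁻¹
    rw [← inv_pow, ← inv_pow]
    nlinarith [sq_nonneg (x - y), sq_nonneg (x + y)]

lemma aux_J (a b : ℝ) (ha : a ≠ 0) (hb : b ≠ 0) :
    ∫ t : ℝ, (((a : ℂ) + t * I)⁻¹ - ((b : ℂ) + t * I)⁻¹)
      = ((a⁻¹ * |a| * Real.pi - b⁻¹ * |b| * Real.pi : ℝ) : ℂ) := by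
  set f : ℝ → ℂ := fun t => ((a : ℂ) + t * I)⁻¹ - ((b : ℂ) + t * I)⁻¹ with hf
  have hi : Integrable f := aux_J_integrable a b ha hb
  have h1 : ∫ t, f (-t) = ∫ t, f t := integral_neg_eq_self f volume
  have h2 : ∫ t, (f t + f (-t)) = (∫ t, f t) + ∫ t, f t := by
    rw [integral_add hi hi.comp_neg, h1]
  have key : ∀ c t : ℝ, c ≠ 0 → ((c : ℂ) + t * I)⁻¹ + ((c : ℂ) + (-t : ℝ) * I)⁻¹
      = ((2 * (c * (c ^ 2 + t ^ 2)⁻¹) : ℝ) : ℂ) := by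
    intro c t hc
    have n1 := aux_ne c t hc
    have n2 := aux_ne c (-t) hc
    have n3 : (c : ℂ) ^ 2 + t ^ 2 ≠ 0 := by
      have : c ^ 2 + t ^ 2 ≠ 0 := by positivity
      exact_mod_cast this
    have e : (c : ℂ) ^ 2 + t ^ 2 = ((c : ℂ) + t * I) * ((c : ℂ) + (-t : ℝ) * I) := by
      push_cast
      linear_combination (t ^ 2 : ℂ) * I_sq
    have s : ((c : ℂ) + t * I) + ((c : ℂ) + (-t : ℝ) * I) = 2 * c := by
      push_cast
      ring
    rw [inv_add_inv n1 n2, ← e, s]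
    push_cast
    rw [div_eq_mul_inv]
    ring
  have h3 : ∀ t, f t + f (-t) = ((2 * (a * (a ^ 2 + t ^ 2)⁻¹ - b * (b ^ 2 + t ^ 2)⁻¹) : ℝ) : ℂ) := by
    intro t
    have k1 := key a t ha
    have k2 := key b t hb
    simp only [hf]
    rw [mul_sub, Complex.ofReal_sub, ← k1, ← k2]
    ring
  have h4 : ∫ t, (f t + f (-t)) =
      ((2 * (a⁻¹ * |a| * Real.pi - b⁻¹ * |b| * Real.pi) : ℝ) : ℂ) := by
    simp_rw [h3]
    rw [integral_complex_ofReal, integral_const_mul, integral_sub ((aux_integrable_sq a ha).const_mul a)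
      ((aux_integrable_sq b hb).const_mul b), aux_integral_sq a ha, aux_integral_sq b hb]
  rw [h4] at h2
  push_cast at h2 ⊢
  linear_combination (-1 / 2 : ℂ) * h2

/-- bound on a strip from decay -/
lemma aux_bound (f : ℂ → ℂ) (a b T C : ℝ)
    (hf : ContinuousOn f {z : ℂ | a ≤ z.re ∧ z.re ≤ b})
    (h : ∀ z : ℂ, a ≤ z.re → z.re ≤ b → T ≤ |z.im| → ‖f z‖ ≤ C * (1 + z.im ^ 2)⁻¹) :
    ∃ C' : ℝ, 0 ≤ C' ∧ ∀ z : ℂ, a ≤ z.re → z.re ≤ b → ‖f z‖ ≤ C' * (1 + z.im ^ 2)⁻¹ := by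
  have hK : IsCompact (Icc a b ×ℂ Icc (-T) T) := isCompact_Icc.reProdIm isCompact_Icc
  obtain ⟨N, hN⟩ := hK.exists_bound_of_continuousOn (f := f)
    (hf.mono (fun z hz => hz.1))
  have hpos : ∀ y : ℝ, 0 < (1 + y ^ 2)⁻¹ := fun y => by positivity
  refine ⟨max (|C|) (|N| * (1 + T ^ 2)), le_max_of_le_left (abs_nonneg _), fun z h1 h2 => ?_⟩
  by_cases hT : T ≤ |z.im|
  · refine (h z h1 h2 hT).trans ?_
    exact mul_le_mul_of_nonneg_right ((le_abs_self C).trans (le_max_left _ _)) (hpos _).le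
  · push Not at hT
    have hz := abs_lt.1 hT
    have h3 := hN z ⟨⟨h1, h2⟩, ⟨hz.1.le, hz.2.le⟩⟩
    have h4 : |N| * (1 + T ^ 2) * (1 + z.im ^ 2)⁻¹
      ≤ max (|C|) (|N| * (1 + T ^ 2)) * (1 + z.im ^ 2)⁻¹ :=
      mul_le_mul_of_nonneg_right (le_max_right _ _) (hpos _).le
    refine le_trans ?_ h4
    rw [← div_eq_mul_inv, le_div_iff₀ (by positivity)]
    have h5 : z.im ^ 2 ≤ T ^ 2 := by nlinarith
    have h6 : ‖f z‖ ≤ |N| := h3.trans (le_abs_self N)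
    exact mul_le_mul h6 (by linarith) (by positivity) (abs_nonneg _)

lemma aux_line_integrable (f : ℂ → ℂ) (a b c C : ℝ) (hac : a ≤ c) (hcb : c ≤ b)
    (hf : ContinuousOn f {z : ℂ | a ≤ z.re ∧ z.re ≤ b})
    (h : ∀ z : ℂ, a ≤ z.re → z.re ≤ b → ‖f z‖ ≤ C * (1 + z.im ^ 2)⁻¹) :
    Integrable fun t : ℝ => f (c + t * I) := by
  refine (integrable_inv_one_add_sq.const_mul C).mono' ?_ (Eventually.of_forall fun t => ?_)
  · apply Continuous.aestronglyMeasurable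
    refine hf.comp_continuous (by fun_prop) (fun t => ?_)
    simp [hac, hcb]
  · simpa using h (c + t * I) (by simpa using hac) (by simpa using hcb)

/-- shift of a line integral -/
lemma aux_shift (f : ℂ → ℂ) (a b C : ℝ) (hab : a ≤ b)
    (hf : DifferentiableOn ℂ f {z : ℂ | a ≤ z.re ∧ z.re ≤ b})
    (h : ∀ z : ℂ, a ≤ z.re → z.re ≤ b → ‖f z‖ ≤ C * (1 + z.im ^ 2)⁻¹) :
    ∫ t : ℝ, f (a + t * I) = ∫ t : ℝ, f (b + t * I) := by
  have ia := aux_line_integrable f a b a C le_rfl hab hf.continuousOn h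
  have ib := aux_line_integrable f a b b C hab le_rfl hf.continuousOn h
  have ta := intervalIntegral_tendsto_integral ia tendsto_neg_atTop_atBot tendsto_id
  have tb := intervalIntegral_tendsto_integral ib tendsto_neg_atTop_atBot tendsto_id
  have hrect : ∀ T : ℝ, (∫ x : ℝ in a..b, f (x + (-T : ℝ) * I)) - (∫ x : ℝ in a..b, f (x + T * I)) +
      I • (∫ y : ℝ in (-T)..T, f (b + y * I)) - I • (∫ y : ℝ in (-T)..T, f (a + y * I)) = 0 := by
    intro T
    have := Complex.integral_boundary_rect_eq_zero_of_differentiableOn f ⟨a, -T⟩ ⟨b, T⟩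
      (hf.mono (fun z hz => by
        have := hz.1
        simp only [mem_preimage, uIcc_of_le hab] at this
        exact this))
    simpa using this
  have hor : ∀ s : ℝ → ℝ, (∀ T, (s T) ^ 2 = T ^ 2) →
      Tendsto (fun T : ℝ => ∫ x : ℝ in a..b, f (x + (s T : ℝ) * I)) atTop (𝓝 0) := by
    intro s hs
    have hlim : Tendsto (fun T : ℝ => C * (1 + T ^ 2)⁻¹ * |b - a|) atTop (𝓝 0) := by
      have : Tendsto (fun T : ℝ => (1 + T ^ 2)⁻¹) atTop (𝓝 0) := by
        apply tendsto_inv_atTop_zero.comp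
        exact tendsto_atTop_add_const_left _ _ (tendsto_pow_atTop two_ne_zero)
      simpa using (this.const_mul C).mul_const |b - a|
    refine squeeze_zero_norm (fun T => ?_) hlim
    apply intervalIntegral.norm_integral_le_of_norm_le_const
    intro x hx
    rw [uIoc_of_le hab] at hx
    have := h (x + (s T : ℝ) * I) (by simpa using hx.1.le) (by simpa using hx.2)
    simpa [hs T] using this
  have lim := (((hor (fun T => -T) (fun T => by ring)).sub (hor id (fun T => rfl))).add
    (tb.const_smul I)).sub (ta.const_smul I)
  have lim0 : Tendsto (fun _ : ℝ => (0 : ℂ)) atTop (𝓝 0) := tendsto_const_nhds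
  have := tendsto_nhds_unique (lim.congr (fun T => hrect T)) lim0
  simp only [smul_eq_mul, sub_zero, zero_add] at this
  have h2 : I * (∫ t : ℝ, f (b + t * I)) = I * ∫ t : ℝ, f (a + t * I) := sub_eq_zero.1 this
  exact (mul_left_cancel₀ I_ne_zero h2).symm

/-- residue lemma -/
lemma aux_residue (f G : ℂ → ℂ) (ζ : ℂ) (a c₁ c₂ b T C : ℝ) (h1 : a < c₁) (h2 : c₁ < ζ.re)
    (h3 : ζ.re < c₂) (h4 : c₂ < b)
    (hG : DifferentiableOn ℂ G {z : ℂ | a < z.re ∧ z.re < b})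
    (hf : ∀ z, z ≠ ζ → f z = G z / (z - ζ))
    (h : ∀ z : ℂ, c₁ ≤ z.re → z.re ≤ c₂ → T ≤ |z.im| → ‖f z‖ ≤ C * (1 + z.im ^ 2)⁻¹) :
    ∫ t : ℝ, f (c₂ + t * I) = (∫ t : ℝ, f (c₁ + t * I)) + 2 * Real.pi * G ζ := by
  set P : ℝ := c₂ - ζ.re + 1 with hP
  set g : ℂ → ℂ := fun z => dslope G ζ z + G ζ * (z - ζ - P)⁻¹ with hg
  have hgf : ∀ z, z ≠ ζ → g z = f z - G ζ * ((z - ζ)⁻¹ - (z - ζ - P)⁻¹) := by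
    intro z hz
    simp only [hg]
    rw [dslope_of_ne _ hz, slope_def_field, hf z hz]
    have : z - ζ ≠ 0 := sub_ne_zero.2 hz
    field_simp
    ring
  have hopen : IsOpen {z : ℂ | a < z.re ∧ z.re < b} :=
    (isOpen_lt continuous_const continuous_re).inter (isOpen_lt continuous_re continuous_const)
  have hd : DifferentiableOn ℂ g {z : ℂ | c₁ ≤ z.re ∧ z.re ≤ c₂} := by
    apply DifferentiableOn.add
    · refine ((Complex.differentiableOn_dslope (hopen.mem_nhds ?_)).2 hG).mono ?_
      · exact ⟨by linarith, by linarith⟩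
      · rintro z ⟨hz1, hz2⟩
        exact ⟨by linarith, by linarith⟩
    · apply DifferentiableOn.const_mul
      apply DifferentiableOn.inv
      · fun_prop
      · rintro z ⟨hz1, hz2⟩ h0
        have := congrArg Complex.re h0
        simp [hP] at this
        linarith
  have hb0 : ∀ z : ℂ, c₁ ≤ z.re → z.re ≤ c₂ → max T (2 * |ζ.im| + 1) ≤ |z.im| →
      ‖g z‖ ≤ (C + ‖G ζ‖ * (8 * |P|)) * (1 + z.im ^ 2)⁻¹ := by
    intro z hz1 hz2 hz3
    have hT := (le_max_left _ _).trans hz3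
    have hT2 := (le_max_right _ _).trans hz3
    have him : |z.im| / 2 ≤ |z.im - ζ.im| := by
      have := abs_sub_abs_le_abs_sub z.im ζ.im
      linarith
    have hpos : 0 < |z.im| / 2 := by have := abs_nonneg ζ.im; linarith
    have hz1' : 1 ≤ |z.im| := by have := abs_nonneg ζ.im; linarith
    have n1 : |z.im| / 2 ≤ ‖z - ζ‖ := him.trans (by simpa using abs_im_le_norm (z - ζ))
    have n2 : |z.im| / 2 ≤ ‖z - ζ - P‖ := him.trans (by simpa using abs_im_le_norm (z - ζ - P))
    have hne1 : z - ζ ≠ 0 := norm_pos_iff.1 (hpos.trans_le n1)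
    have hne2 : z - ζ - P ≠ 0 := norm_pos_iff.1 (hpos.trans_le n2)
    have e : (z - ζ)⁻¹ - (z - ζ - P)⁻¹ = -((P : ℂ) * ((z - ζ)⁻¹ * (z - ζ - P)⁻¹)) := by
      field_simp
      ring
    have hh : ‖(z - ζ)⁻¹ - (z - ζ - P)⁻¹‖ ≤ 8 * |P| * (1 + z.im ^ 2)⁻¹ := by
      rw [e, norm_neg, norm_mul, Complex.norm_real, Real.norm_eq_abs, norm_mul, norm_inv, norm_inv,
        ← mul_inv]
      have : (‖z - ζ‖ * ‖z - ζ - P‖)⁻¹ ≤ ((1 + z.im ^ 2) / 8)⁻¹ := by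
        apply inv_anti₀ (by positivity)
        have := mul_le_mul n1 n2 hpos.le (norm_nonneg _)
        have h9 : z.im ^ 2 = |z.im| ^ 2 := (sq_abs _).symm
        nlinarith
      calc |P| * (‖z - ζ‖ * ‖z - ζ - P‖)⁻¹ ≤ |P| * ((1 + z.im ^ 2) / 8)⁻¹ :=
            mul_le_mul_of_nonneg_left this (abs_nonneg _)
        _ = _ := by rw [inv_div]; ring
    rw [hgf z (sub_ne_zero.1 hne1)]
    calc _ ≤ ‖f z‖ + ‖G ζ * ((z - ζ)⁻¹ - (z - ζ - P)⁻¹)‖ := norm_sub_le _ _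
      _ ≤ C * (1 + z.im ^ 2)⁻¹ + ‖G ζ‖ * (8 * |P| * (1 + z.im ^ 2)⁻¹) := by
        rw [norm_mul]
        exact add_le_add (h z hz1 hz2 hT) (mul_le_mul_of_nonneg_left hh (norm_nonneg _))
      _ = _ := by ring
  obtain ⟨C', -, hC'⟩ := aux_bound g c₁ c₂ _ _ hd.continuousOn hb0
  have hs := aux_shift g c₁ c₂ C' (by linarith) hd hC'
  have hline : ∀ c : ℝ, c₁ ≤ c → c ≤ c₂ → c ≠ ζ.re → ∫ t : ℝ, f (c + t * I) =
      (∫ t : ℝ, g (c + t * I)) + G ζ * (((c - ζ.re)⁻¹ * |c - ζ.re| * Real.pi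
        - (c - ζ.re - P)⁻¹ * |c - ζ.re - P| * Real.pi : ℝ) : ℂ) := by
    intro c hc1 hc2 hc
    have n1 : c - ζ.re ≠ 0 := sub_ne_zero.2 hc
    have n2 : c - ζ.re - P ≠ 0 := by rw [hP]; intro h; linarith
    rw [← aux_J _ _ n1 n2, ← integral_const_mul]
    have ht := integral_sub_right_eq_self (μ := volume) (fun t : ℝ => G ζ *
      ((((c - ζ.re : ℝ) : ℂ) + t * I)⁻¹ - (((c - ζ.re - P : ℝ) : ℂ) + t * I)⁻¹)) ζ.im
    have hint := ((aux_J_integrable _ _ n1 n2).const_mul (G ζ)).comp_sub_right ζ.im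
    rw [← ht, ← integral_add (aux_line_integrable g c₁ c₂ c C' hc1 hc2 hd.continuousOn hC') hint]
    refine integral_congr_ae (Eventually.of_forall fun t => ?_)
    simp only
    have e1 : ((c - ζ.re : ℝ) : ℂ) + ((t - ζ.im : ℝ) : ℂ) * I = c + t * I - ζ := by
      apply Complex.ext <;> simp
    have e2 : ((c - ζ.re - P : ℝ) : ℂ) + ((t - ζ.im : ℝ) : ℂ) * I = c + t * I - ζ - P := by
      apply Complex.ext <;> simp
    rw [e1, e2, hgf]
    · ring
    · intro h0
      have := congrArg Complex.re h0
      simp at this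
      exact hc this
  rw [hline c₂ (by linarith) le_rfl (by linarith), hline c₁ le_rfl (by linarith) (by linarith), hs]
  have s1 : (c₂ - ζ.re)⁻¹ * |c₂ - ζ.re| = 1 := by
    rw [abs_of_pos (by linarith), inv_mul_cancel₀ (by linarith)]
  have s2 : (c₁ - ζ.re)⁻¹ * |c₁ - ζ.re| = -1 := by
    rw [abs_of_neg (by linarith), mul_neg, inv_mul_cancel₀ (by linarith)]
  have s3 : ∀ c, c ≤ c₂ → (c - ζ.re - P)⁻¹ * |c - ζ.re - P| = -1 := by
    intro c hc
    rw [abs_of_neg (by linarith), mul_neg, inv_mul_cancel₀ (by linarith)]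
  rw [s1, s2, s3 c₂ le_rfl, s3 c₁ (by linarith)]
  push_cast
  ring

end aux

section aux2
open MeasureTheory Filter Topology Set

/-- the periodic kernel -/
noncomputable def auxK (l w : ℂ) : ℂ :=
  (2 * Real.pi * I / l) / (Complex.exp ((2 * Real.pi * I / l) * w) - 1)

lemma aux_exp_eq_one (l w : ℂ) (hl : 0 < l.re)
    (h : Complex.exp ((2 * Real.pi * I / l) * w) = 1) : ∃ n : ℤ, w = n * l := by
  have hl0 : l ≠ 0 := by
    rintro rfl
    simp at hl
  obtain ⟨n, hn⟩ := Complex.exp_eq_one_iff.1 h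
  refine ⟨n, ?_⟩
  have : (2 * Real.pi * I : ℂ) ≠ 0 := Complex.two_pi_I_ne_zero
  field_simp at hn
  linear_combination hn

lemma aux_den_ne (l w : ℂ) (hl : 0 < l.re) (h1 : -l.re < w.re) (h2 : w.re < l.re)
    (hw : w ≠ 0) : Complex.exp ((2 * Real.pi * I / l) * w) - 1 ≠ 0 := by
  intro h
  obtain ⟨n, rfl⟩ := aux_exp_eq_one l w hl (sub_eq_zero.1 h)
  have hre : ((n : ℂ) * l).re = n * l.re := by simp
  rw [hre] at h1 h2
  have a1 : (-1 : ℝ) < n := by nlinarith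
  have a2 : (n : ℝ) < 1 := by nlinarith
  have b1 : (-1 : ℤ) < n := by exact_mod_cast a1
  have b2 : n < (1 : ℤ) := by exact_mod_cast a2
  have : n = 0 := by omega
  apply hw
  simp [this]

lemma aux_K_periodic (l w : ℂ) (hl : 0 < l.re) : auxK l (w - l) = auxK l w := by
  have hl0 : l ≠ 0 := by
    rintro rfl
    simp at hl
  unfold auxK
  have : (2 * Real.pi * I / l) * (w - l) = (2 * Real.pi * I / l) * w - 2 * Real.pi * I := by
    field_simp
  rw [this, Complex.exp_periodic.sub_eq]

lemma aux_K_far (l : ℂ) (hl : 0 < l.re) (R : ℝ) : ∃ T : ℝ, ∀ w : ℂ, |w.re| ≤ R → T ≤ |w.im| →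
    ‖auxK l w‖ ≤ 2 * ‖(2 * Real.pi * I / l : ℂ)‖ := by
  set u : ℂ := 2 * Real.pi * I / l with hu
  have hl0 : l ≠ 0 := by
    rintro rfl
    simp at hl
  have hui : 0 < u.im := by
    have hns : 0 < Complex.normSq l := Complex.normSq_pos.2 hl0
    have : u.im = 2 * Real.pi * l.re / Complex.normSq l := by
      simp [hu, Complex.div_im]
    rw [this]
    have := Real.pi_pos
    positivity
  refine ⟨(1 + |u.re| * R) / u.im, fun w h1 h2 => ?_⟩
  have h3 : 1 + |u.re| * R ≤ u.im * |w.im| := by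
    rw [div_le_iff₀ hui] at h2
    linarith
  have hre : (u * w).re = u.re * w.re - u.im * w.im := by simp
  have h4 : 1 ≤ |(u * w).re| := by
    rw [hre]
    have a1 := abs_sub_abs_le_abs_sub (u.im * w.im) (u.re * w.re)
    rw [abs_sub_comm, abs_mul, abs_mul, abs_of_pos hui] at a1
    have a2 := mul_le_mul_of_nonneg_left h1 (abs_nonneg u.re)
    linarith
  have h5 : (1 / 2 : ℝ) ≤ ‖Complex.exp (u * w) - 1‖ := by
    rcases le_abs.1 h4 with h | h
    · have e1 := norm_sub_norm_le (Complex.exp (u * w)) 1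
      rw [Complex.norm_exp, norm_one] at e1
      have := Real.add_one_le_exp (u * w).re
      linarith
    · have e1 := norm_sub_norm_le 1 (Complex.exp (u * w))
      rw [Complex.norm_exp, norm_one, norm_sub_rev] at e1
      have h6 := Real.add_one_le_exp (-(u * w).re)
      have h7 : Real.exp (u * w).re * Real.exp (-(u * w).re) = 1 := by
        rw [← Real.exp_add]; simp
      have h8 := Real.exp_pos (u * w).re
      nlinarith
  unfold auxK
  rw [← hu, norm_div, div_le_iff₀ (by linarith)]
  nlinarith [norm_nonneg u]

lemma aux_K_continuousOn (l : ℂ) (hl : 0 < l.re) :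
    ContinuousOn (auxK l) {w : ℂ | -l.re < w.re ∧ w.re < 0} := by
  unfold auxK
  refine ContinuousOn.div (by fun_prop) (by fun_prop) (fun w hw => ?_)
  refine aux_den_ne l w hl hw.1 (hw.2.trans hl) ?_
  rintro rfl
  simpa using hw.2

lemma aux_K_bdd (l : ℂ) (hl : 0 < l.re) (p q : ℝ) (hp : -l.re < p) (hq : q < 0) :
    ∃ C : ℝ, 0 ≤ C ∧ ∀ w : ℂ, p ≤ w.re → w.re ≤ q → ‖auxK l w‖ ≤ C := by
  obtain ⟨T, hT⟩ := aux_K_far l hl (|p| + |q|)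
  have hK : IsCompact (Icc p q ×ℂ Icc (-T) T) := isCompact_Icc.reProdIm isCompact_Icc
  obtain ⟨N, hN⟩ := hK.exists_bound_of_continuousOn (f := auxK l)
    ((aux_K_continuousOn l hl).mono (fun z hz => ⟨by have := hz.1.1; linarith,
      by have := hz.1.2; linarith⟩))
  refine ⟨max (2 * ‖(2 * Real.pi * I / l : ℂ)‖) N, le_max_of_le_left (by positivity), ?_⟩
  intro w h1 h2
  by_cases h : T ≤ |w.im|
  · refine (hT w ?_ h).trans (le_max_left _ _)
    rw [abs_le]
    constructor
    · have := neg_abs_le p; have := abs_nonneg q; linarith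
    · have := le_abs_self q; have := abs_nonneg p; linarith
  · push Not at h
    have hz := abs_lt.1 h
    exact (hN w ⟨⟨h1, h2⟩, ⟨hz.1.le, hz.2.le⟩⟩).trans (le_max_right _ _)

lemma aux_K_hasDerivAt (l w : ℂ) (hl : 0 < l.re) (h1 : -l.re < w.re) (h2 : w.re < 0) :
    HasDerivAt (auxK l) (-(auxK l w * (auxK l w + 2 * Real.pi * I / l))) w := by
  set u : ℂ := 2 * Real.pi * I / l with hu
  have hne : Complex.exp (u * w) - 1 ≠ 0 := by
    refine aux_den_ne l w hl h1 (h2.trans hl) ?_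
    rintro rfl
    simp at h2
  have hd : HasDerivAt (fun w => Complex.exp (u * w) - 1) (Complex.exp (u * w) * u) w := by
    have := ((hasDerivAt_id w).const_mul u).cexp.sub_const 1
    simpa using this
  have := (hasDerivAt_const w u).div hd hne
  have e : (auxK l) = (fun _ => u) / fun w => Complex.exp (u * w) - 1 := by
    ext w
    simp [auxK, hu]
  have ev : auxK l w = u / (Complex.exp (u * w) - 1) := rfl
  have e2 : -(auxK l w * (auxK l w + u)) = (0 * (Complex.exp (u * w) - 1)
      - u * (Complex.exp (u * w) * u)) / (Complex.exp (u * w) - 1) ^ 2 := by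
    rw [ev]
    field_simp
    ring
  rw [e2, e]
  exact this

/-- the candidate solution with integration line `Re z = c` -/
noncomputable def auxI (l : ℂ) (Δ : ℂ → ℂ) (c : ℝ) (ζ : ℂ) : ℂ :=
  (2 * Real.pi : ℂ)⁻¹ * ∫ t : ℝ, Δ (c + t * I) * auxK l (c + t * I - ζ)

variable {l : ℂ} {Δ : ℂ → ℂ} {A B D : ℝ}

lemma aux_I_shift (hl : 0 < l.re)
    (hd : DifferentiableOn ℂ Δ {z : ℂ | A < z.re ∧ z.re < B})
    (hb : ∀ z : ℂ, A ≤ z.re → z.re ≤ B → ‖Δ z‖ ≤ D * (1 + z.im ^ 2)⁻¹) (ζ : ℂ) (c c' : ℝ)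
    (h1 : A < c) (h2 : ζ.re - l.re < c) (h3 : c ≤ c') (h4 : c' < B) (h5 : c' < ζ.re) :
    auxI l Δ c ζ = auxI l Δ c' ζ := by
  unfold auxI
  congr 1
  obtain ⟨C, hC0, hC⟩ := aux_K_bdd l hl (c - ζ.re) (c' - ζ.re) (by linarith) (by linarith)
  refine aux_shift (fun z => Δ z * auxK l (z - ζ)) c c' (D * C) h3 ?_ ?_
  · apply DifferentiableOn.mul
    · exact hd.mono (fun z hz => ⟨h1.trans_le hz.1, hz.2.trans_lt h4⟩)
    · intro z hz
      have := aux_K_hasDerivAt l (z - ζ) hl (by have := hz.1; simp; linarith)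
        (by have := hz.2; simp; linarith)
      exact (this.comp_sub_const z ζ).differentiableAt.differentiableWithinAt
  · intro z hz1 hz2
    rw [norm_mul]
    have e1 := hb z (by linarith) (by linarith)
    have e2 := hC (z - ζ) (by simp; linarith) (by simp; linarith)
    calc _ ≤ (D * (1 + z.im ^ 2)⁻¹) * C :=
          mul_le_mul e1 e2 (norm_nonneg _) ((norm_nonneg _).trans e1)
      _ = _ := by ring

lemma aux_I_shift' (hl : 0 < l.re)
    (hd : DifferentiableOn ℂ Δ {z : ℂ | A < z.re ∧ z.re < B})
    (hb : ∀ z : ℂ, A ≤ z.re → z.re ≤ B → ‖Δ z‖ ≤ D * (1 + z.im ^ 2)⁻¹) (ζ : ℂ) (c c' : ℝ)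
    (h1 : A < c) (h2 : ζ.re - l.re < c) (h3 : c < B) (h4 : c < ζ.re)
    (h1' : A < c') (h2' : ζ.re - l.re < c') (h3' : c' < B) (h4' : c' < ζ.re) :
    auxI l Δ c ζ = auxI l Δ c' ζ := by
  rcases le_total c c' with h | h
  · exact aux_I_shift hl hd hb ζ c c' h1 h2 h h3' h4'
  · exact (aux_I_shift hl hd hb ζ c' c h1' h2' h h3 h4).symm

lemma aux_I_step (hl : 0 < l.re)
    (hd : DifferentiableOn ℂ Δ {z : ℂ | A < z.re ∧ z.re < B})
    (hb : ∀ z : ℂ, A ≤ z.re → z.re ≤ B → ‖Δ z‖ ≤ D * (1 + z.im ^ 2)⁻¹) (ζ : ℂ) (c₁ c₂ : ℝ)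
    (h1 : A < c₁) (h2 : ζ.re - l.re < c₁) (h3 : c₁ < ζ.re) (h4 : ζ.re < c₂) (h5 : c₂ < B)
    (h6 : c₂ < ζ.re + l.re) :
    auxI l Δ c₂ (ζ + l) = auxI l Δ c₁ ζ + Δ ζ := by
  set u : ℂ := 2 * Real.pi * I / l with hu
  have hl0 : l ≠ 0 := by
    rintro rfl
    simp at hl
  have hu0 : u ≠ 0 := div_ne_zero Complex.two_pi_I_ne_zero hl0
  set E : ℂ → ℂ := dslope (fun w => Complex.exp (u * w)) 0 with hE
  have hEd : Differentiable ℂ E := by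
    rw [← differentiableOn_univ, Complex.differentiableOn_dslope univ_mem]
    fun_prop
  have hE0 : E 0 = u := by
    rw [hE, dslope_same]
    have : HasDerivAt (fun w => Complex.exp (u * w)) (Complex.exp (u * 0) * (u * 1)) 0 :=
      ((hasDerivAt_id (0 : ℂ)).const_mul u).cexp
    rw [this.deriv]
    simp
  have hE1 : ∀ w, w ≠ 0 → E w = (Complex.exp (u * w) - 1) / w := by
    intro w hw
    rw [hE, dslope_of_ne _ hw, slope_def_field]
    simp
  have hEne : ∀ w : ℂ, -l.re < w.re → w.re < l.re → E w ≠ 0 := by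
    intro w hw1 hw2
    by_cases hw : w = 0
    · rw [hw, hE0]; exact hu0
    · rw [hE1 w hw]
      exact div_ne_zero (aux_den_ne l w hl hw1 hw2 hw) hw
  set G : ℂ → ℂ := fun z => Δ z * (u / E (z - ζ)) with hG
  have hGζ : G ζ = Δ ζ := by
    simp [hG, hE0, hu0]
  obtain ⟨T, hT⟩ := aux_K_far l hl l.re
  have hres := aux_residue (fun z => Δ z * auxK l (z - ζ)) G ζ (max A (ζ.re - l.re)) c₁ c₂
    (min B (ζ.re + l.re)) (T + |ζ.im|) (D * (2 * ‖u‖)) (max_lt h1 h2) h3 h4 (lt_min h5 h6) ?_ ?_ ?_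
  · unfold auxI
    have : ∀ t : ℝ, auxK l (c₂ + t * I - (ζ + l)) = auxK l (c₂ + t * I - ζ) := by
      intro t
      rw [← aux_K_periodic l (c₂ + t * I - ζ) hl]
      congr 1
      ring
    simp_rw [this]
    rw [hres, hGζ]
    have : (2 * Real.pi : ℂ) ≠ 0 := by
      have := Real.pi_ne_zero
      simp
    rw [mul_add, inv_mul_cancel_left₀ this]
  · intro z hz
    obtain ⟨hz1, hz2⟩ := hz
    rw [max_lt_iff] at hz1
    rw [lt_min_iff] at hz2
    have hop : IsOpen {z : ℂ | A < z.re ∧ z.re < B} :=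
      (isOpen_lt continuous_const continuous_re).inter (isOpen_lt continuous_re continuous_const)
    have d1 : DifferentiableAt ℂ Δ z := hd.differentiableAt (hop.mem_nhds ⟨hz1.1, hz2.1⟩)
    have d2 : DifferentiableAt ℂ (fun z => E (z - ζ)) z :=
      DifferentiableAt.comp z (hEd (z - ζ)) (by fun_prop)
    refine (d1.mul ((differentiableAt_const u).div d2 ?_)).differentiableWithinAt
    apply hEne
    · simp; linarith
    · simp; linarith
  · intro z hz
    have hz' : z - ζ ≠ 0 := sub_ne_zero.2 hz
    simp only [hG, auxK, ← hu]
    rw [hE1 _ hz']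
    field_simp
  · intro z hz1 hz2 hz3
    rw [norm_mul]
    have e1 := hb z (by linarith) (by linarith)
    have e2 := hT (z - ζ) (by rw [abs_le]; constructor <;> simp <;> linarith) (by
      have := abs_sub_abs_le_abs_sub z.im ζ.im
      rw [sub_im]
      linarith)
    calc _ ≤ (D * (1 + z.im ^ 2)⁻¹) * (2 * ‖u‖) :=
          mul_le_mul e1 e2 (norm_nonneg _) ((norm_nonneg _).trans e1)
      _ = _ := by ring

lemma aux_I_bound
    (hb : ∀ z : ℂ, A ≤ z.re → z.re ≤ B → ‖Δ z‖ ≤ D * (1 + z.im ^ 2)⁻¹) (ζ : ℂ) (c C : ℝ)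
    (h1 : A ≤ c) (h2 : c ≤ B) (hC : ∀ w : ℂ, w.re = c - ζ.re → ‖auxK l w‖ ≤ C) :
    ‖auxI l Δ c ζ‖ ≤ ‖(2 * Real.pi : ℂ)⁻¹‖ * (D * C * Real.pi) := by
  unfold auxI
  rw [norm_mul]
  refine mul_le_mul_of_nonneg_left ?_ (norm_nonneg _)
  have : D * C * Real.pi = ∫ t : ℝ, D * C * (1 + t ^ 2)⁻¹ := by
    rw [integral_const_mul, integral_univ_inv_one_add_sq]
  rw [this]
  refine norm_integral_le_of_norm_le (integrable_inv_one_add_sq.const_mul _)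
    (Eventually.of_forall fun t => ?_)
  rw [norm_mul]
  have e1 := hb (c + t * I) (by simpa using h1) (by simpa using h2)
  have e2 := hC (c + t * I - ζ) (by simp)
  calc _ ≤ (D * (1 + (c + t * I : ℂ).im ^ 2)⁻¹) * C :=
        mul_le_mul e1 e2 (norm_nonneg _) ((norm_nonneg _).trans e1)
    _ = _ := by simp; ring

lemma aux_I_diff (hl : 0 < l.re)
    (hc : ContinuousOn Δ {z : ℂ | A ≤ z.re ∧ z.re ≤ B})
    (hb : ∀ z : ℂ, A ≤ z.re → z.re ≤ B → ‖Δ z‖ ≤ D * (1 + z.im ^ 2)⁻¹) (ζ : ℂ) (c : ℝ)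
    (h1 : A ≤ c) (h2 : c ≤ B) (h3 : c < ζ.re) (h4 : ζ.re < c + l.re) :
    DifferentiableAt ℂ (auxI l Δ c) ζ := by
  unfold auxI
  apply DifferentiableAt.const_mul
  set u : ℂ := 2 * Real.pi * I / l with hu
  obtain ⟨p, hp1, hp2⟩ := exists_between h3
  obtain ⟨q, hq1, hq2⟩ := exists_between h4
  obtain ⟨C, hC0, hC⟩ := aux_K_bdd l hl (c - q) (c - p) (by linarith) (by linarith)
  have hΔ : Continuous fun t : ℝ => Δ (c + t * I) :=
    hc.comp_continuous (by fun_prop) (fun t => by simp [h1, h2])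
  have hΔb : ∀ t : ℝ, ‖Δ (c + t * I)‖ ≤ D * (1 + t ^ 2)⁻¹ := fun t => by
    simpa using hb (c + t * I) (by simpa using h1) (by simpa using h2)
  have hKc : ∀ x : ℂ, p < x.re → x.re < q → Continuous fun t : ℝ => auxK l (c + t * I - x) := by
    intro x hx1 hx2
    refine (aux_K_continuousOn l hl).comp_continuous (by fun_prop) (fun t => ?_)
    constructor <;> simp <;> linarith
  have hop : IsOpen {z : ℂ | p < z.re ∧ z.re < q} :=
    (isOpen_lt continuous_const continuous_re).inter (isOpen_lt continuous_re continuous_const)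
  have hnhds : {z : ℂ | p < z.re ∧ z.re < q} ∈ 𝓝 ζ := hop.mem_nhds ⟨hp2, hq1⟩
  have hKb : ∀ x : ℂ, p < x.re → x.re < q → ∀ t : ℝ, ‖auxK l (c + t * I - x)‖ ≤ C := by
    intro x hx1 hx2 t
    apply hC <;> simp <;> linarith
  have key := hasDerivAt_integral_of_dominated_loc_of_deriv_le (μ := volume) (𝕜 := ℂ)
    (F := fun (x : ℂ) (t : ℝ) => Δ (c + t * I) * auxK l (c + t * I - x))
    (F' := fun (x : ℂ) (t : ℝ) => Δ (c + t * I) *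
      (auxK l (c + t * I - x) * (auxK l (c + t * I - x) + u)))
    (bound := fun t => (D * (C * (C + ‖u‖))) * (1 + t ^ 2)⁻¹) hnhds ?_ ?_ ?_ ?_ ?_ ?_
  · exact key.2.differentiableAt
  · filter_upwards [hnhds] with x hx
    exact (hΔ.mul (hKc x hx.1 hx.2)).aestronglyMeasurable
  · refine (integrable_inv_one_add_sq.const_mul (D * C)).mono'
      (hΔ.mul (hKc ζ hp2 hq1)).aestronglyMeasurable (Eventually.of_forall fun t => ?_)
    rw [norm_mul]
    calc _ ≤ (D * (1 + t ^ 2)⁻¹) * C :=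
          mul_le_mul (hΔb t) (hKb ζ hp2 hq1 t) (norm_nonneg _) ((norm_nonneg _).trans (hΔb t))
      _ = _ := by ring
  · have := hKc ζ hp2 hq1
    exact (hΔ.mul (this.mul (this.add continuous_const))).aestronglyMeasurable
  · refine Eventually.of_forall fun t x hx => ?_
    have k := hKb x hx.1 hx.2 t
    rw [norm_mul, norm_mul]
    calc _ ≤ (D * (1 + t ^ 2)⁻¹) * (C * (C + ‖u‖)) := by
          refine mul_le_mul (hΔb t) ?_ (by positivity) ((norm_nonneg _).trans (hΔb t))
          refine mul_le_mul k ?_ (by positivity) hC0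
          exact (norm_add_le _ _).trans (by linarith)
      _ = _ := by ring
  · exact integrable_inv_one_add_sq.const_mul _
  · refine Eventually.of_forall fun t x hx => ?_
    obtain ⟨hx1, hx2⟩ := hx
    have := aux_K_hasDerivAt l (c + t * I - x) hl (by simp; linarith) (by simp; linarith)
    have h := (this.comp_const_sub (c + t * I) x).const_mul (Δ (c + t * I))
    simpa using h

end aux2

section aux3
open MeasureTheory Filter Topology Set

lemma aux_interior (a b : ℝ) :
    interior {z : ℂ | a ≤ z.re ∧ z.re ≤ b} = {z : ℂ | a < z.re ∧ z.re < b} := by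
  have : {z : ℂ | a ≤ z.re ∧ z.re ≤ b} = {z : ℂ | a ≤ z.re} ∩ {z : ℂ | z.re ≤ b} := rfl
  rw [this, interior_inter, Complex.interior_setOf_le_re, Complex.interior_setOf_re_le]
  rfl

lemma aux_isOpen (a b : ℝ) : IsOpen {z : ℂ | a < z.re ∧ z.re < b} :=
  (isOpen_lt continuous_const continuous_re).inter (isOpen_lt continuous_re continuous_const)

lemma aux_open_solution {l : ℂ} {Δ : ℂ → ℂ} {A B D : ℝ} (hl : 0 < l.re) (hAB : A < B)
    (hc : ContinuousOn Δ {z : ℂ | A ≤ z.re ∧ z.re ≤ B})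
    (hd : DifferentiableOn ℂ Δ {z : ℂ | A < z.re ∧ z.re < B})
    (hb : ∀ z : ℂ, A ≤ z.re → z.re ≤ B → ‖Δ z‖ ≤ D * (1 + z.im ^ 2)⁻¹) :
    ∃ φ₀ : ℂ → ℂ,
      (∀ ζ : ℂ, A < ζ.re → ζ.re < B + l.re → DifferentiableAt ℂ φ₀ ζ) ∧
      (∀ ζ : ℂ, A < ζ.re → ζ.re < B → φ₀ (ζ + l) = φ₀ ζ + Δ ζ) ∧
      (∀ p q : ℝ, A < p → q < B + l.re →
        ∃ M : ℝ, ∀ ζ : ℂ, p ≤ ζ.re → ζ.re ≤ q → ‖φ₀ ζ‖ ≤ M) := by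
  obtain ⟨r, hr0, hr1, hr⟩ : ∃ r : ℝ, 0 < r ∧ 0 < 1 - r ∧ r * (B - A + l.re) = B - A := by
    have hN : 0 < B - A + l.re := by linarith
    refine ⟨(B - A) / (B - A + l.re), div_pos (by linarith) hN, ?_, ?_⟩
    · rw [sub_pos, div_lt_one hN]; linarith
    · field_simp
  set cf : ℝ → ℝ := fun x => A + (x - A) * r with hcf
  have c1 : ∀ x, A < x → A < cf x := fun x hx => by
    have := mul_pos (sub_pos.2 hx) hr0
    simp only [hcf]; linarith
  have c2 : ∀ x, x < B + l.re → cf x < B := fun x hx => by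
    have := mul_pos (sub_pos.2 hx) hr0
    simp only [hcf]; linarith
  have c3 : ∀ x, A < x → cf x < x := fun x hx => by
    have := mul_pos (sub_pos.2 hx) hr1
    simp only [hcf]; linarith
  have c4 : ∀ x, x < B + l.re → x - l.re < cf x := fun x hx => by
    have := mul_pos (sub_pos.2 hx) hr1
    simp only [hcf]; linarith
  refine ⟨fun ζ => auxI l Δ (cf ζ.re) ζ, ?_, ?_, ?_⟩
  · intro ζ h1 h2
    have hdiff := aux_I_diff hl hc hb ζ (cf ζ.re) (c1 _ h1).le (c2 _ h2).le (c3 _ h1)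
      (by have := c4 _ h2; linarith)
    refine hdiff.congr_of_eventuallyEq ?_
    filter_upwards [(aux_isOpen A (B + l.re)).mem_nhds ⟨h1, h2⟩,
      (aux_isOpen (cf ζ.re) (cf ζ.re + l.re)).mem_nhds
        ⟨c3 _ h1, by have := c4 _ h2; linarith⟩] with z hz hz'
    exact aux_I_shift' hl hd hb z _ _ (c1 _ hz.1) (c4 _ hz.2) (c2 _ hz.2) (c3 _ hz.1)
      (c1 _ h1) (by have := hz'.2; linarith) (c2 _ h2) hz'.1
  · intro ζ h1 h2
    have e : (ζ + l).re = ζ.re + l.re := by simp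
    have a1 := c4 (ζ.re + l.re) (by linarith)
    have a2 := c2 (ζ.re + l.re) (by linarith)
    have a3 := c3 (ζ.re + l.re) (by linarith)
    simp only [e]
    exact aux_I_step hl hd hb ζ _ _ (c1 _ h1) (c4 _ (by linarith)) (c3 _ h1) (by linarith) a2 a3
  · intro p q hp hq
    have b1 := c4 q hq
    have b2 := c3 p hp
    obtain ⟨C, hC0, hC⟩ := aux_K_bdd l hl (cf q - q) (cf p - p) (by linarith) (by linarith)
    refine ⟨_, fun ζ h1 h2 => aux_I_bound (l := l) hb ζ (cf ζ.re) C (c1 _ (by linarith)).le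
      (c2 _ (by linarith)).le ?_⟩
    intro w hw
    have m1 := mul_nonneg (sub_nonneg.2 h1) hr1.le
    have m2 := mul_nonneg (sub_nonneg.2 h2) hr1.le
    apply hC
    · rw [hw]; simp only [hcf]; linarith
    · rw [hw]; simp only [hcf]; linarith

lemma aux_exist {l : ℂ} {Δ : ℂ → ℂ} {A B D : ℝ} (hl : 0 < l.re) (hAB : A + l.re < B)
    (hc : ContinuousOn Δ {z : ℂ | A ≤ z.re ∧ z.re ≤ B})
    (hd : DifferentiableOn ℂ Δ {z : ℂ | A < z.re ∧ z.re < B})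
    (hb : ∀ z : ℂ, A ≤ z.re → z.re ≤ B → ‖Δ z‖ ≤ D * (1 + z.im ^ 2)⁻¹) :
    ∃ φ : ℂ → ℂ,
      ContinuousOn φ {ζ : ℂ | A ≤ ζ.re ∧ ζ.re ≤ B + l.re} ∧
      DifferentiableOn ℂ φ {ζ : ℂ | A < ζ.re ∧ ζ.re < B + l.re} ∧
      (∃ M : ℝ, ∀ ζ : ℂ, A ≤ ζ.re → ζ.re ≤ B + l.re → ‖φ ζ‖ ≤ M) ∧
      (∀ ζ : ℂ, A ≤ ζ.re → ζ.re ≤ B → φ (ζ + l) - φ ζ = Δ ζ) := by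
  obtain ⟨φ₀, f1, f2, f3⟩ := aux_open_solution hl (by linarith) hc hd hb
  set φ : ℂ → ℂ := fun ζ => if ζ.re ≤ A then φ₀ (ζ + l) - Δ ζ else
    if B + l.re ≤ ζ.re then φ₀ (ζ - l) + Δ (ζ - l) else φ₀ ζ with hφ
  have g0 : ∀ ζ : ℂ, A < ζ.re → ζ.re < B + l.re → φ ζ = φ₀ ζ := by
    intro ζ h1 h2
    simp only [hφ]
    rw [if_neg (not_le.2 h1), if_neg (not_le.2 h2)]
  have g1 : ∀ ζ : ℂ, A ≤ ζ.re → ζ.re < B → φ ζ = φ₀ (ζ + l) - Δ ζ := by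
    intro ζ h1 h2
    rcases h1.eq_or_lt with h | h
    · simp only [hφ]
      rw [if_pos h.ge]
    · rw [g0 ζ h (by linarith), f2 ζ h h2]
      ring
  have g2 : ∀ ζ : ℂ, A + l.re < ζ.re → ζ.re ≤ B + l.re → φ ζ = φ₀ (ζ - l) + Δ (ζ - l) := by
    intro ζ h1 h2
    rcases h2.eq_or_lt with h | h
    · simp only [hφ]
      rw [if_neg (by linarith), if_pos h.ge]
    · rw [g0 ζ (by linarith) h]
      have := f2 (ζ - l) (by simp; linarith) (by simp; linarith)
      rw [← this]
      simp
  obtain ⟨N, hN⟩ : ∃ N : ℝ, ∀ z : ℂ, A ≤ z.re → z.re ≤ B → ‖Δ z‖ ≤ N := by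
    refine ⟨|D|, fun z h1 h2 => (hb z h1 h2).trans ?_⟩
    have : (1 + z.im ^ 2)⁻¹ ≤ 1 := inv_le_one_of_one_le₀ (by nlinarith [sq_nonneg z.im])
    have h0 : 0 < (1 + z.im ^ 2)⁻¹ := by positivity
    nlinarith [le_abs_self D, abs_nonneg D]
  refine ⟨φ, ?_, ?_, ?_, ?_⟩
  · intro ζ hζ
    obtain ⟨hζ1, hζ2⟩ := hζ
    by_cases h : ζ.re < B
    · have k1 : ContinuousWithinAt (fun z => φ₀ (z + l) - Δ z)
          {ζ : ℂ | A ≤ ζ.re ∧ ζ.re ≤ B + l.re} ζ := by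
        apply ContinuousWithinAt.sub
        · have := (f1 (ζ + l) (by simp; linarith) (by simp; linarith)).continuousAt
          exact (ContinuousAt.comp (f := fun z => z + l) this (by fun_prop)).continuousWithinAt
        · refine (hc ζ ⟨hζ1, h.le⟩).mono_of_mem_nhdsWithin ?_
          filter_upwards [self_mem_nhdsWithin, mem_nhdsWithin_of_mem_nhds
            ((isOpen_lt continuous_re continuous_const).mem_nhds h)] with z hz hz'
          exact ⟨hz.1, le_of_lt hz'⟩
      refine k1.congr_of_eventuallyEq ?_ (g1 ζ hζ1 h)
      filter_upwards [self_mem_nhdsWithin, mem_nhdsWithin_of_mem_nhds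
            ((isOpen_lt continuous_re continuous_const).mem_nhds h)] with z hz hz'
      exact g1 z hz.1 hz'
    · have h' : A + l.re < ζ.re := by linarith
      have hm : Tendsto (fun z => z - l) (𝓝[{ζ : ℂ | A ≤ ζ.re ∧ ζ.re ≤ B + l.re}] ζ)
          (𝓝[{z : ℂ | A ≤ z.re ∧ z.re ≤ B}] (ζ - l)) := by
        apply tendsto_nhdsWithin_of_tendsto_nhds_of_eventually_within
        · exact (ContinuousAt.tendsto (f := fun z => z - l) (x := ζ) (by fun_prop)).mono_left
            nhdsWithin_le_nhds
        · filter_upwards [self_mem_nhdsWithin, mem_nhdsWithin_of_mem_nhds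
            ((isOpen_lt continuous_const continuous_re).mem_nhds h')] with z hz hz'
          have e1 := hz.2
          have e2 : A + l.re < z.re := hz'
          constructor <;> simp <;> linarith
      have k1 : ContinuousWithinAt (fun z => φ₀ (z - l) + Δ (z - l))
          {ζ : ℂ | A ≤ ζ.re ∧ ζ.re ≤ B + l.re} ζ := by
        apply ContinuousWithinAt.add
        · have := (f1 (ζ - l) (by simp; linarith) (by simp; linarith)).continuousAt
          exact (ContinuousAt.comp (f := fun z => z - l) this (by fun_prop)).continuousWithinAt
        · exact Tendsto.comp (hc (ζ - l) ⟨by simp; linarith, by simp; linarith⟩) hm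
      refine k1.congr_of_eventuallyEq ?_ (g2 ζ h' hζ2)
      filter_upwards [self_mem_nhdsWithin, mem_nhdsWithin_of_mem_nhds
            ((isOpen_lt continuous_const continuous_re).mem_nhds h')] with z hz hz'
      exact g2 z hz' hz.2
  · intro ζ hζ
    refine ((f1 ζ hζ.1 hζ.2).congr_of_eventuallyEq ?_).differentiableWithinAt
    filter_upwards [(aux_isOpen A (B + l.re)).mem_nhds hζ] with z hz
    exact g0 z hz.1 hz.2
  · obtain ⟨e, he1, he2⟩ := exists_between hAB
    obtain ⟨M1, hM1⟩ := f3 (A + l.re) (e + l.re) (by linarith) (by linarith)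
    obtain ⟨M2, hM2⟩ := f3 (e - l.re) B (by linarith) (by linarith)
    refine ⟨max (M1 + N) (M2 + N), fun ζ h1 h2 => ?_⟩
    by_cases h : ζ.re ≤ e
    · rw [g1 ζ h1 (by linarith)]
      refine le_trans ((norm_sub_le _ _).trans (add_le_add ?_ ?_)) (le_max_left _ _)
      · apply hM1 <;> simp <;> linarith
      · exact hN ζ h1 (by linarith)
    · push Not at h
      rw [g2 ζ (by linarith) h2]
      refine le_trans ((norm_add_le _ _).trans (add_le_add ?_ ?_)) (le_max_right _ _)
      · apply hM2 <;> simp <;> linarith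
      · apply hN <;> simp <;> linarith
  · intro ζ h1 h2
    rcases h2.eq_or_lt with h | h
    · rw [g0 ζ (by linarith) (by linarith), g2 (ζ + l) (by simp; linarith) (by simp; linarith)]
      simp
    · rw [g1 ζ h1 h, g0 (ζ + l) (by simp; linarith) (by simp; linarith)]
      ring

lemma aux_unique {l : ℂ} {A B : ℝ} (hl : 0 < l.re) (hAB : A + l.re < B) (ψ : ℂ → ℂ)
    (hd : DifferentiableOn ℂ ψ {ζ : ℂ | A < ζ.re ∧ ζ.re < B + l.re})
    (hb : ∃ M : ℝ, ∀ ζ : ℂ, A ≤ ζ.re → ζ.re ≤ B + l.re → ‖ψ ζ‖ ≤ M)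
    (hp : ∀ ζ : ℂ, A ≤ ζ.re → ζ.re ≤ B → ψ (ζ + l) = ψ ζ) :
    ∃ c : ℂ, ∀ ζ : ℂ, A ≤ ζ.re → ζ.re ≤ B + l.re → ψ ζ = c := by
  obtain ⟨M, hM⟩ := hb
  have hpn : ∀ n : ℕ, ∀ ζ : ℂ, A ≤ ζ.re → ζ.re + n * l.re ≤ B + l.re → ψ (ζ + n * l) = ψ ζ := by
    intro n
    induction n with
    | zero => intro ζ _ _; simp
    | succ n ih =>
      intro ζ h1 h2
      push_cast at h2 ⊢
      have hn : 0 ≤ (n : ℝ) * l.re := by positivity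
      have e : ζ + ((n : ℂ) + 1) * l = (ζ + n * l) + l := by ring
      rw [e, hp _ (by simp; linarith) (by simp; linarith), ih ζ h1 (by linarith)]
  set n : ℂ → ℤ := fun ζ => ⌊(ζ.re - A) / l.re⌋ with hn
  have hn1 : ∀ ζ, (n ζ : ℝ) * l.re ≤ ζ.re - A := fun ζ => by
    have := Int.floor_le ((ζ.re - A) / l.re)
    rwa [le_div_iff₀ hl] at this
  have hn2 : ∀ ζ, ζ.re - A < ((n ζ : ℝ) + 1) * l.re := fun ζ => by
    have := Int.lt_floor_add_one ((ζ.re - A) / l.re)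
    rwa [div_lt_iff₀ hl] at this
  set Ψ : ℂ → ℂ := fun ζ => ψ (ζ - n ζ * l) with hΨ
  have hre : ∀ (ζ : ℂ) (k : ℤ), (ζ - k * l).re = ζ.re - k * l.re := fun ζ k => by simp
  have key : ∀ (ζ : ℂ) (k : ℤ), A ≤ ζ.re - k * l.re → ζ.re - k * l.re ≤ B + l.re →
      Ψ ζ = ψ (ζ - k * l) := by
    intro ζ k h1 h2
    have hk : k ≤ n ζ := by
      rw [hn, Int.le_floor, le_div_iff₀ hl]
      linarith
    obtain ⟨j, hj⟩ := Int.eq_ofNat_of_zero_le (sub_nonneg.2 hk)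
    have hnj : n ζ = k + j := by omega
    have := hpn j (ζ - n ζ * l) (by rw [hre]; linarith [hn1 ζ]) (by
      rw [hre, hnj]; push_cast; linarith)
    simp only [hΨ]
    rw [← this]
    congr 1
    rw [hnj]
    push_cast
    ring
  have hdiff : Differentiable ℂ Ψ := by
    intro ζ
    set k : ℤ := n ζ - 1 with hk
    have hk' : (k : ℝ) = n ζ - 1 := by rw [hk]; push_cast; ring
    have a1 : A < ζ.re - k * l.re := by rw [hk']; linarith [hn1 ζ]
    have a2 : ζ.re - k * l.re < B + l.re := by rw [hk']; linarith [hn2 ζ]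
    have d1 : DifferentiableAt ℂ ψ (ζ - k * l) :=
      hd.differentiableAt ((aux_isOpen A (B + l.re)).mem_nhds (by
        constructor
        · rw [hre]; exact a1
        · rw [hre]; exact a2))
    have d2 : DifferentiableAt ℂ (fun z => ψ (z - k * l)) ζ :=
      DifferentiableAt.comp ζ d1 (by fun_prop)
    refine d2.congr_of_eventuallyEq ?_
    filter_upwards [(aux_isOpen (A + k * l.re) (B + l.re + k * l.re)).mem_nhds
      (show ζ ∈ _ from ⟨by linarith, by linarith⟩)] with z hz
    obtain ⟨hz1, hz2⟩ := hz
    exact key z k (by linarith) (by linarith)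
  have hbdd : Bornology.IsBounded (range Ψ) := by
    rw [isBounded_iff_forall_norm_le]
    refine ⟨M, ?_⟩
    rintro _ ⟨ζ, rfl⟩
    apply hM
    · rw [hre]; linarith [hn1 ζ]
    · rw [hre]; linarith [hn2 ζ]
  refine ⟨Ψ 0, fun ζ h1 h2 => ?_⟩
  rw [← hdiff.apply_eq_apply_of_bounded hbdd ζ 0, key ζ 0 (by simpa using h1) (by simpa using h2)]
  simp

lemma aux_decay {Δ : ℂ → ℂ} {A B : ℝ} {m : ℕ} (hm : 3 ≤ m)
    (hcont : ContinuousOn Δ {ζ : ℂ | A ≤ ζ.re ∧ ζ.re ≤ B})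
    (hnorm : ∃ M : ℝ, ∀ ζ : ℂ, A ≤ ζ.re → ζ.re ≤ B → ‖Δ ζ‖ * ‖ζ‖ ^ m ≤ M) :
    ∃ D : ℝ, ∀ z : ℂ, A ≤ z.re → z.re ≤ B → ‖Δ z‖ ≤ D * (1 + z.im ^ 2)⁻¹ := by
  obtain ⟨M, hM⟩ := hnorm
  obtain ⟨D, -, hD⟩ := aux_bound Δ A B 1 (2 * M) hcont (by
    intro z h1 h2 h3
    have h4 := abs_im_le_norm z
    have h5 : ‖z‖ ^ 2 ≤ ‖z‖ ^ m := pow_le_pow_right₀ (by linarith) (by omega)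
    have h6 : 1 + z.im ^ 2 ≤ 2 * ‖z‖ ^ m := by
      have : z.im ^ 2 = |z.im| ^ 2 := (sq_abs _).symm
      nlinarith
    rw [← div_eq_mul_inv, le_div_iff₀ (by positivity)]
    have := mul_le_mul_of_nonneg_left h6 (norm_nonneg (Δ z))
    linarith [hM z h1 h2])
  exact ⟨D, hD⟩

end aux3

/-- existence and uniqueness (up to an additive constant) of a bounded
holomorphic solution `φ` on the strip `{A ≤ Re ζ ≤ B + λ₁}` of the difference equation
`φ(ζ+λ) − φ(ζ) = Δ(ζ)` on `{A ≤ Re ζ ≤ B}`, for `Δ` holomorphic on that strip with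
`sup |Δ(ζ)|·|ζ|^m < ∞`, `m ≥ 3`; here `λ = −2πiτ`, `λ₁ = Re λ = 2π·Im τ > 0`. -/
theorem statement10 (τ : ℂ) (hτ : 0 < τ.im) (A B : ℝ)
    (hAB : A + 2 * Real.pi * τ.im < B) (hB : B ≤ 1)
    (m : ℕ) (hm : 3 ≤ m)
    (Δ : ℂ → ℂ)
    (hcont : ContinuousOn Δ {ζ : ℂ | A ≤ ζ.re ∧ ζ.re ≤ B})
    (hdiff : DifferentiableOn ℂ Δ (interior {ζ : ℂ | A ≤ ζ.re ∧ ζ.re ≤ B}))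
    (hnorm : ∃ M : ℝ, ∀ ζ : ℂ, A ≤ ζ.re → ζ.re ≤ B →
      ‖Δ ζ‖ * ‖ζ‖ ^ m ≤ M) :
    (∃ φ : ℂ → ℂ,
      ContinuousOn φ {ζ : ℂ | A ≤ ζ.re ∧ ζ.re ≤ B + 2 * Real.pi * τ.im} ∧
      DifferentiableOn ℂ φ
        (interior {ζ : ℂ | A ≤ ζ.re ∧ ζ.re ≤ B + 2 * Real.pi * τ.im}) ∧
      (∃ M : ℝ, ∀ ζ : ℂ, A ≤ ζ.re → ζ.re ≤ B + 2 * Real.pi * τ.im →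
        ‖φ ζ‖ ≤ M) ∧
      (∀ ζ : ℂ, A ≤ ζ.re → ζ.re ≤ B →
        φ (ζ + (-(2 * (Real.pi : ℂ) * Complex.I * τ))) - φ ζ = Δ ζ)) ∧
    (∀ φ φ' : ℂ → ℂ,
      ContinuousOn φ {ζ : ℂ | A ≤ ζ.re ∧ ζ.re ≤ B + 2 * Real.pi * τ.im} →
      DifferentiableOn ℂ φ
        (interior {ζ : ℂ | A ≤ ζ.re ∧ ζ.re ≤ B + 2 * Real.pi * τ.im}) →
      (∃ M : ℝ, ∀ ζ : ℂ, A ≤ ζ.re → ζ.re ≤ B + 2 * Real.pi * τ.im →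
        ‖φ ζ‖ ≤ M) →
      (∀ ζ : ℂ, A ≤ ζ.re → ζ.re ≤ B →
        φ (ζ + (-(2 * (Real.pi : ℂ) * Complex.I * τ))) - φ ζ = Δ ζ) →
      ContinuousOn φ' {ζ : ℂ | A ≤ ζ.re ∧ ζ.re ≤ B + 2 * Real.pi * τ.im} →
      DifferentiableOn ℂ φ'
        (interior {ζ : ℂ | A ≤ ζ.re ∧ ζ.re ≤ B + 2 * Real.pi * τ.im}) →
      (∃ M : ℝ, ∀ ζ : ℂ, A ≤ ζ.re → ζ.re ≤ B + 2 * Real.pi * τ.im →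
        ‖φ' ζ‖ ≤ M) →
      (∀ ζ : ℂ, A ≤ ζ.re → ζ.re ≤ B →
        φ' (ζ + (-(2 * (Real.pi : ℂ) * Complex.I * τ))) - φ' ζ = Δ ζ) →
      ∃ c : ℂ, ∀ ζ : ℂ, A ≤ ζ.re → ζ.re ≤ B + 2 * Real.pi * τ.im →
        φ' ζ = φ ζ + c) := by
  obtain ⟨D, hD⟩ := aux_decay hm hcont hnorm
  rw [aux_interior] at hdiff
  set l : ℂ := -(2 * (Real.pi : ℂ) * Complex.I * τ) with hl
  have hre : l.re = 2 * Real.pi * τ.im := by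
    simp [hl]
  have hpos : 0 < l.re := by
    rw [hre]
    have := Real.pi_pos
    positivity
  rw [← hre] at hAB ⊢
  rw [aux_interior]
  refine ⟨aux_exist hpos hAB hcont hdiff hD, ?_⟩
  intro φ φ' _ d1 b1 e1 _ d2 b2 e2
  obtain ⟨M1, hM1⟩ := b1
  obtain ⟨M2, hM2⟩ := b2
  obtain ⟨c, hc⟩ := aux_unique hpos hAB (fun z => φ' z - φ z) (d2.sub d1)
    ⟨M2 + M1, fun ζ h1 h2 => (norm_sub_le _ _).trans (add_le_add (hM2 ζ h1 h2) (hM1 ζ h1 h2))⟩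
    (fun ζ h1 h2 => by
      have k1 := e1 ζ h1 h2
      have k2 := e2 ζ h1 h2
      linear_combination k2 - k1)
  refine ⟨c, fun ζ h1 h2 => ?_⟩
  have := hc ζ h1 h2
  linear_combination this
end

section
/- Let m ≥ 3 be an integer and d > λ₁ a real number. There exists a constant C > 0, depending only on τ, m and d, such that for all real A, B with B − A = d and B ≤ −1, and for every Δ holomorphic on the closed strip Σ_{A,B} = {ζ ∈ ℂ : A ≤ Re ζ ≤ B} with ‖Δ‖_m := sup_{ζ∈Σ_{A,B}} |Δ(ζ)|·|ζ|^m < ∞, there is a holomorphic function φ on Σ_{A,B+λ₁} = {ζ ∈ ℂ : A ≤ Re ζ ≤ B+λ₁} solving φ(ζ+λ) − φ(ζ) = Δ(ζ) for all ζ ∈ Σ_{A,B} and satisfying sup_{ζ∈Σ_{A,B+λ₁}} |φ(ζ)| ≤ C·‖Δ‖_m·I_m, where I_m := ∫_ℝ ds/|B+is|^m. -/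
open Complex

/-- The basic function with zero set `λℤ`. -/
noncomputable def EE (τ w : ℂ) : ℂ := Complex.exp (w / τ) - 1

lemma EE_zero (τ w : ℂ) (hτ : 0 < τ.im) (h : EE τ w = 0) :
    ∃ n : ℤ, w.re = -(n * (2 * Real.pi * τ.im)) ∧ (n = 0 → w = 0) := by
  have hτ0 : τ ≠ 0 := by rintro rfl; simp at hτ
  have h1 : Complex.exp (w / τ) = 1 := sub_eq_zero.mp h
  obtain ⟨n, hn⟩ := Complex.exp_eq_one_iff.mp h1
  have hw : w = n * (2 * Real.pi * I) * τ := by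
    rw [← hn]; field_simp
  refine ⟨n, ?_, ?_⟩
  · rw [hw]; simp; ring
  · rintro rfl; rw [hw]; simp

lemma EE_ne (τ w : ℂ) (hτ : 0 < τ.im) (h : |w.re| < 2 * Real.pi * τ.im) (hw : w ≠ 0) :
    EE τ w ≠ 0 := by
  intro h0
  obtain ⟨n, hn, h1⟩ := EE_zero τ w hτ h0
  have hL : 0 < 2 * Real.pi * τ.im := by positivity
  apply hw
  apply h1
  rw [hn, abs_neg, abs_mul, abs_of_pos hL] at h
  have : |(n : ℝ)| < 1 := by
    by_contra hc
    push Not at hc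
    nlinarith
  exact Int.abs_lt_one_iff.mp (by exact_mod_cast this)

lemma EE_large (τ : ℂ) (hτ : 0 < τ.im) :
    ∃ Y : ℝ, 0 < Y ∧ ∀ w : ℂ, |w.re| ≤ 2 * Real.pi * τ.im → Y ≤ |w.im| →
      1 / 2 ≤ ‖EE τ w‖ := by
  have hτ0 : τ ≠ 0 := by rintro rfl; simp at hτ
  have hN : 0 < normSq τ := normSq_pos.mpr hτ0
  refine ⟨(normSq τ + 2 * Real.pi * τ.im * |τ.re|) / τ.im, by positivity, ?_⟩
  intro w hw hY
  have hre : (w / τ).re = (w.re * τ.re + w.im * τ.im) / normSq τ := by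
    rw [Complex.div_re]; ring
  rw [div_le_iff₀ hτ] at hY
  have h1 : |w.re * τ.re| ≤ 2 * Real.pi * τ.im * |τ.re| := by
    rw [abs_mul]; exact mul_le_mul_of_nonneg_right hw (abs_nonneg _)
  have h2 : 1 ≤ |(w / τ).re| := by
    rw [hre, abs_div, abs_of_pos hN, le_div_iff₀ hN]
    have h3 : |w.im * τ.im| = |w.im| * τ.im := by rw [abs_mul, abs_of_pos hτ]
    have h4 : |w.im * τ.im| ≤ |w.re * τ.re + w.im * τ.im| + |w.re * τ.re| := by
      have := abs_sub (w.re * τ.re + w.im * τ.im) (w.re * τ.re)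
      simpa using this
    linarith
  unfold EE
  have hn : ‖Complex.exp (w / τ)‖ = Real.exp (w / τ).re := Complex.norm_exp _
  rcases le_abs.mp h2 with h | h
  · have h5 : (w / τ).re + 1 ≤ Real.exp (w / τ).re := Real.add_one_le_exp _
    have := norm_sub_norm_le (Complex.exp (w / τ)) 1
    rw [norm_one] at this
    linarith
  · have h5 : -(w / τ).re + 1 ≤ Real.exp (-(w / τ).re) := Real.add_one_le_exp _
    rw [Real.exp_neg] at h5
    have hp := Real.exp_pos (w / τ).re
    have h6 : Real.exp (w / τ).re ≤ 1 / 2 := by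
      have : 2 ≤ (Real.exp (w / τ).re)⁻¹ := by linarith
      rw [le_inv_comm₀ (by norm_num) hp] at this
      linarith
    have := norm_sub_norm_le 1 (Complex.exp (w / τ))
    rw [norm_one, norm_sub_rev] at this
    linarith

lemma EE_cont (τ : ℂ) : Differentiable ℂ (EE τ) := by
  unfold EE; fun_prop

lemma EE_bound (τ : ℂ) (hτ : 0 < τ.im) (σ : ℝ) (hσ : 0 < σ) :
    ∃ κ : ℝ, 0 < κ ∧ ∀ w : ℂ, σ ≤ |w.re| → |w.re| ≤ 2 * Real.pi * τ.im - σ →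
      κ ≤ ‖EE τ w‖ := by
  obtain ⟨Y, hY, hlarge⟩ := EE_large τ hτ
  set L := 2 * Real.pi * τ.im with hL
  let S : Set ℂ := {w | σ ≤ |w.re| ∧ |w.re| ≤ L - σ ∧ |w.im| ≤ Y}
  have hScl : IsClosed S := by
    refine IsClosed.inter ?_ (IsClosed.inter ?_ ?_)
    · exact isClosed_le continuous_const continuous_re.abs
    · exact isClosed_le continuous_re.abs continuous_const
    · exact isClosed_le continuous_im.abs continuous_const
  have hS : IsCompact S := by
    refine IsCompact.of_isClosed_subset
      ((isCompact_Icc (a := -(L - σ)) (b := L - σ)).reProdIm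
        (isCompact_Icc (a := -Y) (b := Y))) hScl ?_
    rintro w ⟨_, h2, h3⟩
    exact ⟨abs_le.mp h2, abs_le.mp h3⟩
  rcases S.eq_empty_or_nonempty with he | hne
  · refine ⟨1 / 2, by norm_num, fun w h1 h2 => hlarge w (by linarith) ?_⟩
    by_contra hc
    have : w ∈ S := ⟨h1, h2, (not_le.mp hc).le⟩
    rw [he] at this; exact this
  · obtain ⟨w0, hw0, hmin⟩ := hS.exists_isMinOn hne
      (f := fun w => ‖EE τ w‖) ((EE_cont τ).continuous.norm.continuousOn)
    have hpos : 0 < ‖EE τ w0‖ := by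
      rw [norm_pos_iff]
      apply EE_ne τ w0 hτ
      · have := hw0.2.1; rw [← hL]; linarith
      · rintro rfl
        have := hw0.1; simp at this; linarith
    refine ⟨min (1 / 2) ‖EE τ w0‖, by positivity, fun w h1 h2 => ?_⟩
    by_cases hc : |w.im| ≤ Y
    · exact (min_le_right _ _).trans (hmin (show w ∈ S from ⟨h1, h2, hc⟩))
    · exact (min_le_left _ _).trans (hlarge w (by linarith) (not_le.mp hc).le)

lemma strip_cauchy (a b : ℝ) (hab : a ≤ b) (f : ℂ → ℂ) (p : ℂ)
    (hc : ContinuousOn f {ζ : ℂ | a ≤ ζ.re ∧ ζ.re ≤ b})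
    (hd : ∀ ζ : ℂ, a < ζ.re → ζ.re < b → ζ ≠ p → DifferentiableAt ℂ f ζ)
    (M T0 : ℝ)
    (hM : ∀ ζ : ℂ, a ≤ ζ.re → ζ.re ≤ b → T0 ≤ |ζ.im| → ‖f ζ‖ ≤ M / (1 + ζ.im ^ 2))
    (ia : MeasureTheory.Integrable (fun y : ℝ => f ((a : ℂ) + y * I)))
    (ib : MeasureTheory.Integrable (fun y : ℝ => f ((b : ℂ) + y * I))) :
    ∫ y : ℝ, f ((a : ℂ) + y * I) = ∫ y : ℝ, f ((b : ℂ) + y * I) := by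
  have ta := MeasureTheory.intervalIntegral_tendsto_integral ia Filter.tendsto_neg_atTop_atBot Filter.tendsto_id
  have tb := MeasureTheory.intervalIntegral_tendsto_integral ib Filter.tendsto_neg_atTop_atBot Filter.tendsto_id
  have tsub := ta.sub tb
  have tz : Filter.Tendsto (fun T : ℝ => (∫ y in (-T)..(id T), f ((a : ℂ) + y * I)) -
      ∫ y in (-T)..(id T), f ((b : ℂ) + y * I)) Filter.atTop (nhds 0) := by
    have hlim : Filter.Tendsto (fun T : ℝ => 2 * (|M| * (b - a)) * (1 + T ^ 2)⁻¹)
        Filter.atTop (nhds 0) := by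
      have h0 : Filter.Tendsto (fun T : ℝ => 1 + T ^ 2) Filter.atTop Filter.atTop :=
        Filter.tendsto_atTop_add_const_left _ _ (Filter.tendsto_pow_atTop (by norm_num))
      simpa using (tendsto_inv_atTop_zero.comp h0).const_mul (2 * (|M| * (b - a)))
    refine squeeze_zero_norm' ?_ hlim
    filter_upwards [Filter.eventually_ge_atTop (max T0 0)] with T hT
    have hT0 : T0 ≤ T := (le_max_left _ _).trans hT
    have hT1 : 0 ≤ T := (le_max_right _ _).trans hT
    have key := integral_boundary_rect_eq_zero_of_differentiable_on_off_countable f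
      ((a : ℂ) + (-T : ℝ) * I) ((b : ℂ) + (T : ℝ) * I) {p} (Set.countable_singleton p)
      (hc.mono (by
        intro z hz
        rw [mem_reProdIm] at hz
        have := hz.1
        simp [Set.uIcc_of_le hab] at this
        exact this))
      (by
        rintro z ⟨hz, hzp⟩
        rw [mem_reProdIm] at hz
        have := hz.1
        simp [hab] at this
        exact hd z this.1 this.2 hzp)
    simp only [add_re, ofReal_re, mul_re, I_re, mul_zero, ofReal_im, I_im, mul_one, sub_self,
      add_zero, add_im, mul_im, zero_add] at key
    have hb : ∀ t : ℝ, |t| = T → ‖∫ x in a..b, f ((x : ℂ) + t * I)‖ ≤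
        |M| * (1 + T ^ 2)⁻¹ * |b - a| := by
      intro t ht
      apply intervalIntegral.norm_integral_le_of_norm_le_const
      intro x hx
      rw [Set.uIoc_of_le hab] at hx
      have := hM ((x : ℂ) + t * I) (by simpa using hx.1.le) (by simpa using hx.2)
        (by simpa [ht] using hT0)
      refine this.trans ?_
      have h2 : ((x : ℂ) + t * I).im ^ 2 = T ^ 2 := by
        simp [← ht]
      rw [h2, div_eq_mul_inv]
      gcongr
      exact le_abs_self M
    have h1 := hb (-T) (by rw [abs_neg, abs_of_nonneg hT1])
    have h2 := hb T (abs_of_nonneg hT1)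
    rw [abs_of_nonneg (sub_nonneg.mpr hab)] at h1 h2
    have h3 : I • ((∫ y in (-T)..(id T), f ((a : ℂ) + y * I)) -
      ∫ y in (-T)..(id T), f ((b : ℂ) + y * I)) =
      (∫ x in a..b, f ((x : ℂ) + (-T : ℝ) * I)) - ∫ x in a..b, f ((x : ℂ) + (T : ℝ) * I) := by
      simp only [id, smul_eq_mul] at key ⊢
      linear_combination -key
    have h4 := congrArg norm h3
    rw [norm_smul, norm_I, one_mul] at h4
    rw [h4]
    refine (norm_sub_le _ _).trans ?_
    linarith
  exact sub_eq_zero.mp (tendsto_nhds_unique tsub tz)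

lemma poisson_int (a : ℝ) (ha : a ≠ 0) :
    MeasureTheory.Integrable (fun y : ℝ => a / (a ^ 2 + y ^ 2)) ∧
    ∫ y : ℝ, a / (a ^ 2 + y ^ 2) = a⁻¹ * |a| * Real.pi := by
  have h : (fun y : ℝ => a / (a ^ 2 + y ^ 2)) =
      fun y : ℝ => a⁻¹ * (1 + (a⁻¹ * y) ^ 2)⁻¹ := by
    funext y
    have : a ^ 2 + y ^ 2 ≠ 0 := by positivity
    have h2 : 1 + (a⁻¹ * y) ^ 2 ≠ 0 := by positivity
    field_simp
  rw [h]
  refine ⟨(integrable_inv_one_add_sq.comp_mul_left' (inv_ne_zero ha)).const_mul _, ?_⟩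
  rw [MeasureTheory.integral_const_mul,
    MeasureTheory.Measure.integral_comp_mul_left (fun u : ℝ => (1 + u ^ 2)⁻¹),
    integral_univ_inv_one_add_sq]
  simp [mul_assoc]

lemma q_lower (R : ℝ) (w : ℂ) (μ : ℝ) (hμ : 0 ≤ μ) (h1 : μ ≤ |w.re|) (h2 : μ ≤ |w.re + R|) :
    μ ^ 2 + w.im ^ 2 ≤ ‖w * (w + R)‖ := by
  have e1 : ‖w‖ ^ 2 = w.re ^ 2 + w.im ^ 2 := by
    rw [Complex.sq_norm, normSq_apply]; ring
  have e2 : ‖w + R‖ ^ 2 = (w.re + R) ^ 2 + w.im ^ 2 := by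
    rw [Complex.sq_norm, normSq_apply]; simp; ring
  have f1 : μ ^ 2 ≤ w.re ^ 2 := by rw [← sq_abs w.re]; gcongr
  have f2 : μ ^ 2 ≤ (w.re + R) ^ 2 := by rw [← sq_abs (w.re + R)]; gcongr
  rw [norm_mul]
  apply le_of_sq_le_sq _ (by positivity)
  rw [mul_pow, e1, e2, sq]
  have := sq_nonneg w.im
  have := sq_nonneg μ
  gcongr

lemma q_int (R a : ℝ) (hR : 0 < R) (ha : a ≠ 0) (haR : 0 < a + R) :
    MeasureTheory.Integrable (fun y : ℝ => (R : ℂ) / (((a : ℂ) + y * I) * ((a : ℂ) + y * I + R))) ∧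
    ∫ y : ℝ, (R : ℂ) / (((a : ℂ) + y * I) * ((a : ℂ) + y * I + R)) =
      (((a⁻¹ * |a| - 1) * Real.pi : ℝ) : ℂ) := by
  have n1 : ∀ y : ℝ, (a : ℂ) + y * I ≠ 0 := by
    intro y h; apply ha; simpa using congrArg re h
  have n2 : ∀ y : ℝ, (a : ℂ) + y * I + R ≠ 0 := by
    intro y h; apply haR.ne'; simpa using congrArg re h
  set q : ℝ → ℂ := fun y => (R : ℂ) / (((a : ℂ) + y * I) * ((a : ℂ) + y * I + R)) with hq
  have hint : MeasureTheory.Integrable q := by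
    set μ := min |a| (a + R) with hμ
    have hμ0 : 0 < μ := lt_min (abs_pos.mpr ha) haR
    refine MeasureTheory.Integrable.mono' (((poisson_int μ hμ0.ne').1).const_mul (R / μ)) ?_ ?_
    · apply Continuous.aestronglyMeasurable
      rw [hq]
      refine Continuous.div continuous_const (by fun_prop) ?_
      intro y
      exact mul_ne_zero (n1 y) (n2 y)
    · refine Filter.Eventually.of_forall fun y => ?_
      rw [hq]
      simp only [norm_div, Complex.norm_real, Real.norm_eq_abs, abs_of_pos hR]
      have := q_lower R ((a : ℂ) + y * I) μ hμ0.le (by simp [hμ])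
        (by simp only [add_re, ofReal_re, mul_re, I_re, mul_zero, ofReal_im, I_im, mul_one, sub_self, add_zero]; rw [abs_of_pos haR]; exact min_le_right _ _)
      have e : ((a : ℂ) + y * I).im = y := by simp
      rw [e] at this
      have e2 : R / μ * (μ / (μ ^ 2 + y ^ 2)) = R / (μ ^ 2 + y ^ 2) := by
        field_simp
      rw [e2]
      gcongr
  refine ⟨hint, ?_⟩
  have hneg : ∫ y : ℝ, q (-y) = ∫ y : ℝ, q y := MeasureTheory.integral_neg_eq_self q _
  have hsum : ∫ y : ℝ, (q y + q (-y)) = 2 * ∫ y : ℝ, q y := by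
    rw [MeasureTheory.integral_add hint hint.comp_neg, hneg]; ring
  have hpt : ∀ y : ℝ, q y + q (-y) =
      ((2 * (a / (a ^ 2 + y ^ 2) - (a + R) / ((a + R) ^ 2 + y ^ 2)) : ℝ) : ℂ) := by
    intro y
    have m1 := n1 y
    have m2 := n2 y
    have m3 := n1 (-y)
    have m4 := n2 (-y)
    have k1 : (a : ℂ) ^ 2 + y ^ 2 = (a + y * I) * (a + (-y : ℝ) * I) := by
      push_cast; linear_combination (y : ℂ) ^ 2 * I_sq
    have k2 : ((a : ℂ) + R) ^ 2 + y ^ 2 = (a + y * I + R) * (a + (-y : ℝ) * I + R) := by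
      push_cast; linear_combination (y : ℂ) ^ 2 * I_sq
    have hs : (a : ℂ) = ((a + y * I) + (a + (-y : ℝ) * I)) / 2 := by push_cast; ring
    have e1 : ((2 * (a / (a ^ 2 + y ^ 2) - (a + R) / ((a + R) ^ 2 + y ^ 2)) : ℝ) : ℂ) =
        2 * ((a : ℂ) / ((a : ℂ) ^ 2 + y ^ 2) - (a + R) / (((a : ℂ) + R) ^ 2 + y ^ 2)) := by
      push_cast; ring
    rw [e1, k1, k2, hq]
    simp only
    generalize (a : ℂ) + y * I = u at *
    generalize (a : ℂ) + (-y : ℝ) * I = v at *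
    rw [hs]
    field_simp
    ring
  have p1 := poisson_int a ha
  have p2 := poisson_int (a + R) haR.ne'
  simp_rw [hpt] at hsum
  rw [integral_complex_ofReal, MeasureTheory.integral_const_mul, MeasureTheory.integral_sub p1.1 p2.1, p1.2, p2.2,
    abs_of_pos haR, inv_mul_cancel₀ haR.ne'] at hsum
  have h2 : (2 : ℂ) ≠ 0 := two_ne_zero
  apply mul_left_cancel₀ h2
  rw [← hsum]
  push_cast; ring

/-- hypotheses on the right-hand side -/
structure Good (A B N : ℝ) (Δ : ℂ → ℂ) : Prop where
  cont : ContinuousOn Δ {ζ : ℂ | A ≤ ζ.re ∧ ζ.re ≤ B}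
  diff : ∀ ζ : ℂ, A < ζ.re → ζ.re < B → DifferentiableAt ℂ Δ ζ
  bd : ∀ ζ : ℂ, A ≤ ζ.re → ζ.re ≤ B → ‖Δ ζ‖ ≤ N / (1 + ζ.im ^ 2)

lemma Good.nonneg {A B N : ℝ} {Δ : ℂ → ℂ} (h : Good A B N Δ) {ζ : ℂ} (h1 : A ≤ ζ.re)
    (h2 : ζ.re ≤ B) : 0 ≤ N := by
  have := (norm_nonneg _).trans (h.bd ζ h1 h2)
  by_contra hc
  have := div_neg_of_neg_of_pos (not_le.mp hc) (show 0 < 1 + ζ.im ^ 2 by positivity)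
  linarith

lemma Good.contLine {A B N : ℝ} {Δ : ℂ → ℂ} (h : Good A B N Δ) {c : ℝ} (h1 : A ≤ c)
    (h2 : c ≤ B) : Continuous (fun y : ℝ => Δ ((c : ℂ) + y * I)) := by
  apply h.cont.comp_continuous (by fun_prop)
  intro y; simp [h1, h2]

lemma Good.intLine {A B N : ℝ} {Δ : ℂ → ℂ} (h : Good A B N Δ) {c : ℝ} (h1 : A ≤ c)
    (h2 : c ≤ B) : MeasureTheory.Integrable (fun y : ℝ => Δ ((c : ℂ) + y * I)) := by
  refine MeasureTheory.Integrable.mono' (integrable_inv_one_add_sq.const_mul N)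
    (h.contLine h1 h2).aestronglyMeasurable (Filter.Eventually.of_forall fun y => ?_)
  have := h.bd ((c : ℂ) + y * I) (by simpa using h1) (by simpa using h2)
  simpa [div_eq_mul_inv] using this

lemma line_ne (τ : ℂ) (hτ : 0 < τ.im) (c : ℝ) (ζ : ℂ) (h1 : c ≠ ζ.re)
    (h2 : |c - ζ.re| < 2 * Real.pi * τ.im) (y : ℝ) : EE τ ((c : ℂ) + y * I - ζ) ≠ 0 := by
  apply EE_ne τ _ hτ
  · simpa using h2
  · intro h
    apply h1
    have := congrArg re h
    simp at this
    linarith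

lemma line_bound (τ : ℂ) (hτ : 0 < τ.im) (c : ℝ) (ζ : ℂ) (h1 : c ≠ ζ.re)
    (h2 : |c - ζ.re| < 2 * Real.pi * τ.im) :
    ∃ κ : ℝ, 0 < κ ∧ ∀ y : ℝ, κ ≤ ‖EE τ ((c : ℂ) + y * I - ζ)‖ := by
  obtain ⟨κ, hκ, h⟩ := EE_bound τ hτ (min |c - ζ.re| (2 * Real.pi * τ.im - |c - ζ.re|))
    (lt_min (abs_pos.mpr (sub_ne_zero.mpr h1)) (by linarith))
  refine ⟨κ, hκ, fun y => h _ ?_ ?_⟩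
  · simp
  · have := min_le_right |c - ζ.re| (2 * Real.pi * τ.im - |c - ζ.re|)
    simp only [sub_re, add_re, ofReal_re, mul_re, I_re, mul_zero, ofReal_im, I_im, mul_one,
      sub_self, add_zero]
    linarith

/-- The integral over a vertical line. -/
noncomputable def JJ (τ : ℂ) (Δ : ℂ → ℂ) (c : ℝ) (ζ : ℂ) : ℂ :=
  ∫ y : ℝ, Δ ((c : ℂ) + y * I) / EE τ ((c : ℂ) + y * I - ζ)

lemma Good.intK {A B N : ℝ} {Δ : ℂ → ℂ} (h : Good A B N Δ) (τ : ℂ) (hτ : 0 < τ.im) {c : ℝ}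
    (hA : A ≤ c) (hB : c ≤ B) (ζ : ℂ) (h1 : c ≠ ζ.re)
    (h2 : |c - ζ.re| < 2 * Real.pi * τ.im) :
    MeasureTheory.Integrable
      (fun y : ℝ => Δ ((c : ℂ) + y * I) / EE τ ((c : ℂ) + y * I - ζ)) := by
  obtain ⟨κ, hκ, hb⟩ := line_bound τ hτ c ζ h1 h2
  refine MeasureTheory.Integrable.mono' (((h.intLine hA hB).norm).mul_const κ⁻¹) ?_ ?_
  · apply Continuous.aestronglyMeasurable
    refine (h.contLine hA hB).div ?_ (line_ne τ hτ c ζ h1 h2)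
    exact (EE_cont τ).continuous.comp (by fun_prop)
  · refine Filter.Eventually.of_forall fun y => ?_
    rw [norm_div, div_eq_mul_inv]
    have := hb y
    gcongr

lemma JJ_norm {A B N : ℝ} {Δ : ℂ → ℂ} (h : Good A B N Δ) (τ : ℂ) {c : ℝ}
    (hA : A ≤ c) (hB : c ≤ B) (ζ : ℂ) (κ : ℝ) (hκ : 0 < κ)
    (hb : ∀ y : ℝ, κ ≤ ‖EE τ ((c : ℂ) + y * I - ζ)‖) :
    ‖JJ τ Δ c ζ‖ ≤ κ⁻¹ * ∫ y : ℝ, ‖Δ ((c : ℂ) + y * I)‖ := by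
  unfold JJ
  rw [mul_comm, ← MeasureTheory.integral_mul_const]
  refine MeasureTheory.norm_integral_le_of_norm_le (((h.intLine hA hB).norm).mul_const κ⁻¹) ?_
  refine Filter.Eventually.of_forall fun y => ?_
  rw [norm_div, div_eq_mul_inv]
  have := hb y
  gcongr

lemma tail_im (ζ η : ℂ) (Y : ℝ) (h : 2 * |ζ.im| + Y + 1 ≤ |η.im|) (hY : 0 ≤ Y) :
    Y ≤ |(η - ζ).im| ∧ 1 + η.im ^ 2 ≤ 8 * (η - ζ).im ^ 2 := by
  have h1 : |η.im| - |ζ.im| ≤ |(η - ζ).im| := by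
    rw [sub_im]; exact abs_sub_abs_le_abs_sub _ _
  have h0 := abs_nonneg ζ.im
  refine ⟨by linarith, ?_⟩
  have h2 : |η.im| ≤ 2 * |(η - ζ).im| := by linarith
  have h3 : 1 ≤ |η.im| := by linarith
  rw [← sq_abs η.im, ← sq_abs (η - ζ).im]
  nlinarith

lemma JJ_same_aux {A B N : ℝ} {Δ : ℂ → ℂ} (h : Good A B N Δ) (τ : ℂ) (hτ : 0 < τ.im) {c c' : ℝ}
    (hA : A ≤ c) (hB : c' ≤ B) (ζ : ℂ) (hcc : c ≤ c') (h1 : ζ.re - 2 * Real.pi * τ.im < c)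
    (h2 : c' < ζ.re) : JJ τ Δ c ζ = JJ τ Δ c' ζ := by
  unfold JJ
  obtain ⟨Y, hY, hlarge⟩ := EE_large τ hτ
  have hn : ∀ η : ℂ, c ≤ η.re → η.re ≤ c' → EE τ (η - ζ) ≠ 0 := by
    intro η a b
    apply EE_ne τ _ hτ
    · rw [sub_re, abs_lt]; constructor <;> linarith
    · intro h0; have := congrArg re h0; simp at this; linarith
  have hN : 0 ≤ N := h.nonneg (ζ := (c : ℂ)) (by simpa using hA) (by simp; linarith)
  refine strip_cauchy c c' hcc (fun η => Δ η / EE τ (η - ζ)) 0 ?_ ?_ (N * 2)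
    (2 * |ζ.im| + Y + 1) ?_ ?_ ?_
  · refine ContinuousOn.div (h.cont.mono ?_) ?_ ?_
    · rintro η ⟨a, b⟩; exact ⟨by linarith, by linarith⟩
    · exact ((EE_cont τ).continuous.comp (by fun_prop)).continuousOn
    · rintro η ⟨a, b⟩; exact hn η a b
  · intro η a b _
    refine DifferentiableAt.div (h.diff η (by linarith) (by linarith)) ?_ (hn η a.le b.le)
    exact ((EE_cont τ).comp (by fun_prop : Differentiable ℂ fun η : ℂ => η - ζ)) η
  · intro η a b ht
    have := hlarge (η - ζ) (by rw [sub_re, abs_le]; constructor <;> linarith)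
      (tail_im ζ η Y ht hY.le).1
    have h3 := h.bd η (by linarith) (by linarith)
    rw [norm_div]
    calc ‖Δ η‖ / ‖EE τ (η - ζ)‖ ≤ (N / (1 + η.im ^ 2)) / (1 / 2) := by gcongr
      _ = _ := by ring
  · exact h.intK τ hτ hA (by linarith) ζ (by linarith) (by rw [abs_lt]; constructor <;> linarith)
  · exact h.intK τ hτ (by linarith) hB ζ (by linarith) (by rw [abs_lt]; constructor <;> linarith)

lemma JJ_same {A B N : ℝ} {Δ : ℂ → ℂ} (h : Good A B N Δ) (τ : ℂ) (hτ : 0 < τ.im) {c c' : ℝ}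
    (hA : A ≤ c) (hB : c ≤ B) (hA' : A ≤ c') (hB' : c' ≤ B) (ζ : ℂ)
    (h1 : ζ.re - 2 * Real.pi * τ.im < c) (h2 : c < ζ.re)
    (h1' : ζ.re - 2 * Real.pi * τ.im < c') (h2' : c' < ζ.re) : JJ τ Δ c ζ = JJ τ Δ c' ζ := by
  rcases le_total c c' with hc | hc
  · exact JJ_same_aux h τ hτ hA hB' ζ hc h1 h2'
  · exact (JJ_same_aux h τ hτ hA' hB ζ hc h1' h2).symm

lemma JJ_jump {A B N : ℝ} {Δ : ℂ → ℂ} (h : Good A B N Δ) (τ : ℂ) (hτ : 0 < τ.im) {a b : ℝ}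
    (hA : A ≤ a) (hB : b ≤ B) (ζ : ℂ) (h1 : ζ.re - 2 * Real.pi * τ.im < a)
    (h2 : a < ζ.re) (h3 : ζ.re < b) (h4 : b < ζ.re + 2 * Real.pi * τ.im) :
    JJ τ Δ b ζ - JJ τ Δ a ζ = 2 * Real.pi * τ * Δ ζ := by
  have hτ0 : τ ≠ 0 := by rintro rfl; simp at hτ
  set L := 2 * Real.pi * τ.im with hL
  have hL0 : 0 < L := by positivity
  obtain ⟨Y, hY, hlarge⟩ := EE_large τ hτ
  set e : ℂ → ℂ := dslope (EE τ) 0 with he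
  have hE0 : EE τ 0 = 0 := by simp [EE]
  have he0 : e 0 = τ⁻¹ := by
    rw [he, dslope_same]
    have : HasDerivAt (EE τ) (Complex.exp (0 / τ) * (1 / τ)) 0 :=
      (((hasDerivAt_id (0 : ℂ)).div_const τ).cexp).sub_const 1
    rw [this.deriv]; simp
  have hen : ∀ w : ℂ, w ≠ 0 → e w = w⁻¹ * EE τ w := by
    intro w hw
    rw [he, dslope_of_ne _ hw, slope_def_field, hE0]; simp; ring
  have hene : ∀ w : ℂ, |w.re| < L → e w ≠ 0 := by
    intro w hw
    by_cases h0 : w = 0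
    · rw [h0, he0]; exact inv_ne_zero hτ0
    · rw [hen w h0]; exact mul_ne_zero (inv_ne_zero h0) (EE_ne τ w hτ hw h0)
  have hed : Differentiable ℂ e := by
    have : DifferentiableOn ℂ e Set.univ :=
      (differentiableOn_dslope Filter.univ_mem).mpr (EE_cont τ).differentiableOn
    exact differentiableOn_univ.mp this
  have hed' : Differentiable ℂ (fun η : ℂ => e (η - ζ)) :=
    hed.comp (by fun_prop : Differentiable ℂ fun η : ℂ => η - ζ)
  set G : ℂ → ℂ := fun η => Δ η / e (η - ζ) - τ * Δ ζ * (L / (η - ζ + L)) with hG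
  have hre : ∀ η : ℂ, a ≤ η.re → η.re ≤ b → |(η - ζ).re| < L := by
    intro η p q; rw [sub_re, abs_lt]; constructor <;> linarith
  have hne2 : ∀ η : ℂ, a ≤ η.re → η.re ≤ b → η - ζ + L ≠ 0 := by
    intro η p q h0; have := congrArg re h0; simp at this; linarith
  have hGζ : G ζ = 0 := by
    have : (L : ℂ) ≠ 0 := by exact_mod_cast hL0.ne'
    simp [hG, he0, this]; ring
  have hGc : ContinuousOn G {η : ℂ | a ≤ η.re ∧ η.re ≤ b} := by
    refine ContinuousOn.sub (ContinuousOn.div (h.cont.mono ?_) hed'.continuous.continuousOn ?_)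
      (ContinuousOn.mul continuousOn_const (ContinuousOn.div continuousOn_const (by fun_prop) ?_))
    · rintro η ⟨p, q⟩; exact ⟨by linarith, by linarith⟩
    · rintro η ⟨p, q⟩; exact hene _ (hre η p q)
    · rintro η ⟨p, q⟩; exact hne2 η p q
  have hGd : ∀ η : ℂ, a < η.re → η.re < b → DifferentiableAt ℂ G η := by
    intro η p q
    refine DifferentiableAt.sub (DifferentiableAt.div (h.diff η (by linarith) (by linarith))
      (hed' η) (hene _ (hre η p.le q.le))) ?_
    refine DifferentiableAt.mul (differentiableAt_const _) ?_
    exact DifferentiableAt.div (differentiableAt_const _) (by fun_prop) (hne2 η p.le q.le)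
  set f : ℂ → ℂ := dslope G ζ with hf
  have hfn : ∀ η : ℂ, η ≠ ζ → f η = Δ η / EE τ (η - ζ) -
      τ * Δ ζ * (L / ((η - ζ) * (η - ζ + L))) := by
    intro η hη
    have h0 : η - ζ ≠ 0 := sub_ne_zero.mpr hη
    rw [hf, dslope_of_ne _ hη, slope_def_field, hGζ, hG]
    simp only [sub_zero]
    rw [hen _ h0, sub_div]
    congr 1
    · rw [div_div]; congr 1; field_simp
    · rw [mul_div_assoc, div_div, mul_comm (η - ζ + L)]
  have hnhds : {η : ℂ | a ≤ η.re ∧ η.re ≤ b} ∈ nhds ζ := by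
    have : IsOpen {η : ℂ | a < η.re ∧ η.re < b} :=
      (isOpen_lt continuous_const continuous_re).inter (isOpen_lt continuous_re continuous_const)
    exact Filter.mem_of_superset (this.mem_nhds ⟨h2, h3⟩) fun η hη => ⟨hη.1.le, hη.2.le⟩
  have linef : ∀ c : ℝ, c ≠ ζ.re → (fun y : ℝ => f ((c : ℂ) + y * I)) = fun y : ℝ =>
      Δ ((c : ℂ) + y * I) / EE τ ((c : ℂ) + y * I - ζ) -
      τ * Δ ζ * (L / (((c : ℂ) + y * I - ζ) * ((c : ℂ) + y * I - ζ + L))) := by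
    intro c hc
    funext y
    apply hfn
    rintro h0
    apply hc
    rw [← h0]; simp
  have qline : ∀ c : ℝ, c ≠ ζ.re → 0 < c - ζ.re + L →
      MeasureTheory.Integrable
        (fun y : ℝ => (L : ℂ) / (((c : ℂ) + y * I - ζ) * ((c : ℂ) + y * I - ζ + L))) ∧
      ∫ y : ℝ, (L : ℂ) / (((c : ℂ) + y * I - ζ) * ((c : ℂ) + y * I - ζ + L)) =
      ((((c - ζ.re)⁻¹ * |c - ζ.re| - 1) * Real.pi : ℝ) : ℂ) := by
    intro c hc hcL
    have hq := q_int L (c - ζ.re) hL0 (sub_ne_zero.mpr hc) hcL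
    have heq : (fun y : ℝ => (L : ℂ) / (((c : ℂ) + y * I - ζ) * ((c : ℂ) + y * I - ζ + L))) =
        fun y : ℝ => (fun y : ℝ => (L : ℂ) / ((((c - ζ.re : ℝ) : ℂ) + y * I) *
          (((c - ζ.re : ℝ) : ℂ) + y * I + L))) (y - ζ.im) := by
      funext y
      have : (c : ℂ) + y * I - ζ = ((c - ζ.re : ℝ) : ℂ) + (y - ζ.im : ℝ) * I := by
        apply Complex.ext <;> simp
      simp only [this]
    rw [heq]
    refine ⟨hq.1.comp_sub_right _, ?_⟩
    rw [MeasureTheory.integral_sub_right_eq_self (μ := MeasureTheory.volume)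
      (fun y : ℝ => (L : ℂ) / ((((c - ζ.re : ℝ) : ℂ) + y * I) *
          (((c - ζ.re : ℝ) : ℂ) + y * I + L)))]
    exact hq.2
  have Ka := h.intK τ hτ hA (by linarith) ζ h2.ne (by rw [← hL, abs_lt]; constructor <;> linarith)
  have Kb := h.intK τ hτ (by linarith) hB ζ h3.ne' (by rw [← hL, abs_lt]; constructor <;> linarith)
  have Qa := qline a h2.ne (by linarith)
  have Qb := qline b h3.ne' (by linarith)
  have hN : 0 ≤ N := h.nonneg (ζ := (a : ℂ)) (by simpa using hA) (by simp; linarith)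
  have key := strip_cauchy a b (by linarith) f ζ
    ((continuousOn_dslope hnhds).mpr ⟨hGc, hGd ζ h2 h3⟩)
    (fun η p q hη => (differentiableAt_dslope_of_ne hη).mpr (hGd η p q))
    (N * 2 + ‖τ * Δ ζ‖ * (L * 8)) (2 * |ζ.im| + Y + 1)
    (by
      intro η p q ht
      obtain ⟨t1, t2⟩ := tail_im ζ η Y ht hY.le
      have hη : η ≠ ζ := by
        rintro rfl; simp at t1; linarith
      rw [hfn η hη]
      have b1 := hlarge (η - ζ) (hre η p q).le t1
      have b2 := h.bd η (by linarith) (by linarith)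
      have b3 := q_lower L (η - ζ) 0 le_rfl (abs_nonneg _) (abs_nonneg _)
      have hpos : 0 < 1 + η.im ^ 2 := by positivity
      have b4 : (1 + η.im ^ 2) / 8 ≤ ‖(η - ζ) * (η - ζ + L)‖ := by linarith
      refine (norm_sub_le _ _).trans ?_
      rw [norm_div, norm_mul (τ * Δ ζ), norm_div (L : ℂ), Complex.norm_real,
        Real.norm_eq_abs, abs_of_pos hL0]
      calc ‖Δ η‖ / ‖EE τ (η - ζ)‖ + ‖τ * Δ ζ‖ * (L / ‖(η - ζ) * (η - ζ + L)‖)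
          ≤ (N / (1 + η.im ^ 2)) / (1 / 2) + ‖τ * Δ ζ‖ * (L / ((1 + η.im ^ 2) / 8)) := by gcongr
        _ = _ := by field_simp)
    (by rw [linef a h2.ne]; exact Ka.sub (Qa.1.const_mul _))
    (by rw [linef b h3.ne']; exact Kb.sub (Qb.1.const_mul _))
  rw [linef a h2.ne, linef b h3.ne', MeasureTheory.integral_sub Ka (Qa.1.const_mul _),
    MeasureTheory.integral_sub Kb (Qb.1.const_mul _), MeasureTheory.integral_const_mul,
    MeasureTheory.integral_const_mul, Qa.2, Qb.2] at key
  have sa : (a - ζ.re)⁻¹ * |a - ζ.re| = -1 := by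
    rw [abs_of_neg (by linarith), mul_neg, inv_mul_cancel₀ (by linarith)]
  have sb : (b - ζ.re)⁻¹ * |b - ζ.re| = 1 := by
    rw [abs_of_pos (by linarith), inv_mul_cancel₀ (by linarith)]
  rw [sa, sb] at key
  unfold JJ
  push_cast at key
  linear_combination -key

lemma JJ_diff {A B N : ℝ} {Δ : ℂ → ℂ} (h : Good A B N Δ) (τ : ℂ) (hτ : 0 < τ.im) {c : ℝ}
    (hA : A ≤ c) (hB : c ≤ B) (ζ₀ : ℂ) (h1 : c < ζ₀.re)
    (h2 : ζ₀.re < c + 2 * Real.pi * τ.im) : DifferentiableAt ℂ (JJ τ Δ c) ζ₀ := by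
  have hτ0 : τ ≠ 0 := by rintro rfl; simp at hτ
  set L := 2 * Real.pi * τ.im with hL
  set σ := min (ζ₀.re - c) (c + L - ζ₀.re) / 2 with hσ
  have hσ0 : 0 < σ := by
    have : 0 < min (ζ₀.re - c) (c + L - ζ₀.re) := lt_min (by linarith) (by linarith)
    rw [hσ]; linarith
  have hσ1 : 2 * σ ≤ ζ₀.re - c := by
    have := min_le_left (ζ₀.re - c) (c + L - ζ₀.re); rw [hσ]; linarith
  have hσ2 : 2 * σ ≤ c + L - ζ₀.re := by
    have := min_le_right (ζ₀.re - c) (c + L - ζ₀.re); rw [hσ]; linarith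
  obtain ⟨κ, hκ, hb⟩ := EE_bound τ hτ σ hσ0
  set s : Set ℂ := {ζ | c + σ < ζ.re ∧ ζ.re < c + L - σ} with hs
  have hso : IsOpen s :=
    (isOpen_lt continuous_const continuous_re).inter (isOpen_lt continuous_re continuous_const)
  have hsm : s ∈ nhds ζ₀ := hso.mem_nhds ⟨by linarith, by linarith⟩
  have hbs : ∀ ζ ∈ s, ∀ y : ℝ, κ ≤ ‖EE τ ((c : ℂ) + y * I - ζ)‖ := by
    rintro ζ ⟨p, q⟩ y
    have e : ((c : ℂ) + y * I - ζ).re = c - ζ.re := by simp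
    have e2 : |c - ζ.re| = ζ.re - c := by rw [abs_of_neg (by linarith)]; ring
    apply hb
    · rw [e, e2]; linarith
    · rw [e, e2]; linarith
  have hnes : ∀ ζ ∈ s, ∀ y : ℝ, EE τ ((c : ℂ) + y * I - ζ) ≠ 0 := by
    intro ζ hζ y h0
    have := hbs ζ hζ y
    rw [h0, norm_zero] at this; linarith
  have hcE : ∀ ζ : ℂ, Continuous (fun y : ℝ => EE τ ((c : ℂ) + y * I - ζ)) := fun ζ =>
    (EE_cont τ).continuous.comp (by fun_prop)
  have hz : ζ₀ ∈ s := ⟨by linarith, by linarith⟩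
  have main := hasDerivAt_integral_of_dominated_loc_of_deriv_le
    (μ := MeasureTheory.volume)
    (F := fun (ζ : ℂ) (y : ℝ) => Δ ((c : ℂ) + y * I) / EE τ ((c : ℂ) + y * I - ζ))
    (F' := fun (ζ : ℂ) (y : ℝ) => Δ ((c : ℂ) + y * I) *
      (((EE τ ((c : ℂ) + y * I - ζ))⁻¹ + (EE τ ((c : ℂ) + y * I - ζ))⁻¹ ^ 2) * τ⁻¹))
    (bound := fun y : ℝ => ‖Δ ((c : ℂ) + y * I)‖ * ((κ⁻¹ + κ⁻¹ ^ 2) * ‖τ⁻¹‖))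
    (x₀ := ζ₀) hsm ?_ ?_ ?_ ?_ ?_ ?_
  · exact main.2.differentiableAt
  · filter_upwards [hsm] with ζ hζ
    exact ((h.contLine hA hB).div (hcE ζ) (hnes ζ hζ)).aestronglyMeasurable
  · exact h.intK τ hτ hA hB ζ₀ h1.ne (by rw [← hL, abs_lt]; constructor <;> linarith)
  · apply Continuous.aestronglyMeasurable
    have := (hcE ζ₀).inv₀ (hnes ζ₀ hz)
    exact (h.contLine hA hB).mul ((this.add (this.pow 2)).mul continuous_const)
  · refine Filter.Eventually.of_forall fun y ζ hζ => ?_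
    have hi : ‖(EE τ ((c : ℂ) + y * I - ζ))⁻¹‖ ≤ κ⁻¹ := by
      rw [norm_inv]; exact inv_anti₀ hκ (hbs ζ hζ y)
    rw [norm_mul, norm_mul]
    gcongr
    refine (norm_add_le _ _).trans ?_
    rw [norm_pow]
    gcongr
  · exact (h.intLine hA hB).norm.mul_const _
  · refine Filter.Eventually.of_forall fun y ζ hζ => ?_
    have hE : HasDerivAt (fun ζ : ℂ => EE τ ((c : ℂ) + y * I - ζ))
        (Complex.exp (((c : ℂ) + y * I - ζ) / τ) * (-1 / τ)) ζ :=
      ((((hasDerivAt_id ζ).const_sub ((c : ℂ) + y * I)).div_const τ).cexp).sub_const 1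
    have := (hasDerivAt_const ζ (Δ ((c : ℂ) + y * I))).fun_div hE (hnes ζ hζ y)
    refine this.congr_deriv ?_
    have hn := hnes ζ hζ y
    have hx : Complex.exp (((c : ℂ) + y * I - ζ) / τ) = EE τ ((c : ℂ) + y * I - ζ) + 1 := by
      simp [EE]
    rw [hx]
    field_simp
    ring

lemma weight_ineq (B c y : ℝ) (hB : B ≤ -1) (hc : c ≤ B) :
    ‖(B : ℂ) + y * I‖ ≤ ‖(c : ℂ) + y * I‖ := by
  rw [Complex.norm_add_mul_I, Complex.norm_add_mul_I]
  apply Real.sqrt_le_sqrt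
  nlinarith

lemma weight_low (B y : ℝ) (m : ℕ) (hm : 3 ≤ m) (hB : B ≤ -1) :
    1 + y ^ 2 ≤ ‖(B : ℂ) + y * I‖ ^ m := by
  have h2 : ‖(B : ℂ) + y * I‖ ^ 2 = B ^ 2 + y ^ 2 := by
    rw [Complex.norm_add_mul_I, Real.sq_sqrt (by positivity)]
  have h1 : 1 ≤ ‖(B : ℂ) + y * I‖ := by
    have := Complex.abs_re_le_norm ((B : ℂ) + y * I)
    simp at this
    have h3 := neg_le_abs B
    linarith
  calc 1 + y ^ 2 ≤ ‖(B : ℂ) + y * I‖ ^ 2 := by rw [h2]; nlinarith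
    _ ≤ _ := pow_le_pow_right₀ h1 (by omega)

lemma weight_int (B : ℝ) (m : ℕ) (hm : 3 ≤ m) (hB : B ≤ -1) :
    MeasureTheory.Integrable (fun y : ℝ => 1 / ‖(B : ℂ) + (y : ℂ) * I‖ ^ m) := by
  refine MeasureTheory.Integrable.mono' integrable_inv_one_add_sq ?_ ?_
  · apply Continuous.aestronglyMeasurable
    refine continuous_const.div (by fun_prop) ?_
    intro y
    have := weight_low B y m hm hB
    have : 0 < 1 + y ^ 2 := by positivity
    linarith
  · refine Filter.Eventually.of_forall fun y => ?_
    have := weight_low B y m hm hB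
    rw [Real.norm_of_nonneg (by positivity), one_div]
    gcongr

lemma weight_sup (B : ℝ) (m : ℕ) (hm : 3 ≤ m) (hB : B ≤ -1) :
    1 / |B| ^ m ≤ 2 ^ m * ∫ y : ℝ, 1 / ‖(B : ℂ) + (y : ℂ) * I‖ ^ m := by
  have hB0 : 1 ≤ |B| := by have := neg_le_abs B; linarith
  have hi := weight_int B m hm hB
  have h1 : ∫ y in (0 : ℝ)..1, 1 / (2 * |B|) ^ m ≤
      ∫ y in (0 : ℝ)..1, 1 / ‖(B : ℂ) + (y : ℂ) * I‖ ^ m := by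
    apply intervalIntegral.integral_mono_on (by norm_num) (by simp) hi.intervalIntegrable
    intro y hy
    have hp : 0 < ‖(B : ℂ) + (y : ℂ) * I‖ ^ m := by
      have := weight_low B y m hm hB
      have : 0 < 1 + y ^ 2 := by positivity
      linarith
    have : ‖(B : ℂ) + (y : ℂ) * I‖ ≤ 2 * |B| := by
      refine (norm_add_le _ _).trans ?_
      simp only [Complex.norm_real, norm_mul, norm_I, mul_one, Real.norm_eq_abs]
      rw [abs_of_nonneg hy.1]
      linarith [hy.2]
    gcongr
  have h2 : ∫ y in (0 : ℝ)..1, 1 / ‖(B : ℂ) + (y : ℂ) * I‖ ^ m ≤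
      ∫ y : ℝ, 1 / ‖(B : ℂ) + (y : ℂ) * I‖ ^ m := by
    rw [intervalIntegral.integral_of_le (by norm_num)]
    exact MeasureTheory.setIntegral_le_integral hi
      (Filter.Eventually.of_forall fun y => by positivity)
  simp only [intervalIntegral.integral_const, sub_zero, one_smul] at h1
  have h3 := h1.trans h2
  calc 1 / |B| ^ m = 2 ^ m * (1 / (2 * |B|) ^ m) := by rw [mul_pow]; field_simp
    _ ≤ _ := by gcongr

/-- a uniform bound for solutions of the difference equation. For `m ≥ 3` and
`d > λ₁` there is `C > 0` (depending only on `τ`, `m`, `d`) such that for all strips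
`{A ≤ Re ζ ≤ B}` with `B − A = d`, `B ≤ −1`, and every `Δ` holomorphic there with
`‖Δ‖_m < ∞`, there is a holomorphic solution `φ` of `φ(ζ+λ) − φ(ζ) = Δ(ζ)` on the
enlarged strip with `sup |φ| ≤ C·‖Δ‖_m·I_m`, where `I_m = ∫_ℝ ds/|B+is|^m` and
`λ = −2πiτ`, `λ₁ = 2π·Im τ`. -/
theorem statement11 (τ : ℂ) (hτ : 0 < τ.im) (m : ℕ) (hm : 3 ≤ m)
    (d : ℝ) (hd : 2 * Real.pi * τ.im < d) :
    ∃ C : ℝ, 0 < C ∧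
      ∀ A B : ℝ, B - A = d → B ≤ -1 →
        ∀ Δ : ℂ → ℂ,
          ContinuousOn Δ {ζ : ℂ | A ≤ ζ.re ∧ ζ.re ≤ B} →
          DifferentiableOn ℂ Δ (interior {ζ : ℂ | A ≤ ζ.re ∧ ζ.re ≤ B}) →
          BddAbove ((fun ζ : ℂ => ‖Δ ζ‖ * ‖ζ‖ ^ m) ''
            {ζ : ℂ | A ≤ ζ.re ∧ ζ.re ≤ B}) →
          ∃ φ : ℂ → ℂ,
            ContinuousOn φ {ζ : ℂ | A ≤ ζ.re ∧ ζ.re ≤ B + 2 * Real.pi * τ.im} ∧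
            DifferentiableOn ℂ φ
              (interior {ζ : ℂ | A ≤ ζ.re ∧ ζ.re ≤ B + 2 * Real.pi * τ.im}) ∧
            (∀ ζ : ℂ, A ≤ ζ.re → ζ.re ≤ B →
              φ (ζ + (-(2 * (Real.pi : ℂ) * Complex.I * τ))) - φ ζ = Δ ζ) ∧
            (∀ ζ : ℂ, A ≤ ζ.re → ζ.re ≤ B + 2 * Real.pi * τ.im →
              ‖φ ζ‖ ≤
                C * sSup ((fun ζ : ℂ => ‖Δ ζ‖ * ‖ζ‖ ^ m) ''
                    {ζ : ℂ | A ≤ ζ.re ∧ ζ.re ≤ B}) *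
                  (∫ s : ℝ, 1 / ‖(B : ℂ) + (s : ℂ) * Complex.I‖ ^ m)) := by
  have hτ0 : τ ≠ 0 := by rintro rfl; simp at hτ
  set L := 2 * Real.pi * τ.im with hL
  have hL0 : 0 < L := by positivity
  have hd0 : 0 < d := hL0.trans hd
  set lam : ℂ := -(2 * (Real.pi : ℂ) * Complex.I * τ) with hlam
  have hlre : lam.re = L := by simp [hlam, hL]
  set σ := L / 2 * (L / (d + L)) with hσ
  have hσ0 : 0 < σ := by positivity
  obtain ⟨κ, hκ, hbκ⟩ := EE_bound τ hτ σ hσ0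
  set α : ℂ := (2 * Real.pi * τ)⁻¹ with hα
  have hα0 : 2 * (Real.pi : ℂ) * τ ≠ 0 := by
    have : (Real.pi : ℂ) ≠ 0 := by exact_mod_cast Real.pi_ne_zero
    exact mul_ne_zero (mul_ne_zero two_ne_zero this) hτ0
  refine ⟨‖α‖ * κ⁻¹ + 2 ^ m, by positivity, ?_⟩
  intro A B hBA hB Δ hc hdif hbdd
  set N := sSup ((fun ζ : ℂ => ‖Δ ζ‖ * ‖ζ‖ ^ m) '' {ζ : ℂ | A ≤ ζ.re ∧ ζ.re ≤ B}) with hN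
  set W := ∫ s : ℝ, 1 / ‖(B : ℂ) + (s : ℂ) * Complex.I‖ ^ m with hW
  have hW0 : 0 ≤ W := MeasureTheory.integral_nonneg fun y => by positivity
  have hAB : A < B := by linarith
  have hNb : ∀ ζ : ℂ, A ≤ ζ.re → ζ.re ≤ B → ‖Δ ζ‖ * ‖ζ‖ ^ m ≤ N := fun ζ h1 h2 =>
    le_csSup hbdd ⟨ζ, ⟨h1, h2⟩, rfl⟩
  have hN0 : 0 ≤ N := le_trans (by positivity) (hNb (B : ℂ) (by simpa using hAB.le) (by simp))
  have hsharp : ∀ ζ : ℂ, A ≤ ζ.re → ζ.re ≤ B →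
      ‖Δ ζ‖ ≤ N * (1 / ‖(B : ℂ) + ζ.im * I‖ ^ m) := by
    intro ζ h1 h2
    have e : (ζ.re : ℂ) + ζ.im * I = ζ := Complex.re_add_im ζ
    have w1 := weight_ineq B ζ.re ζ.im hB h2
    rw [e] at w1
    have hp : 0 < ‖(B : ℂ) + ζ.im * I‖ ^ m := by
      have := weight_low B ζ.im m hm hB
      have : 0 < 1 + ζ.im ^ 2 := by positivity
      linarith
    rw [mul_one_div, le_div_iff₀ hp]
    refine le_trans ?_ (hNb ζ h1 h2)
    gcongr
  have hgood : Good A B N Δ := by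
    refine ⟨hc, ?_, ?_⟩
    · intro ζ h1 h2
      apply hdif.differentiableAt
      have ho : IsOpen {η : ℂ | A < η.re ∧ η.re < B} :=
        (isOpen_lt continuous_const continuous_re).inter (isOpen_lt continuous_re continuous_const)
      refine Filter.mem_of_superset (ho.mem_nhds ⟨h1, h2⟩) ?_
      exact interior_maximal (fun η hη => ⟨hη.1.le, hη.2.le⟩) ho
    · intro ζ h1 h2
      refine (hsharp ζ h1 h2).trans ?_
      rw [mul_one_div]
      have := weight_low B ζ.im m hm hB
      gcongr
  have hΔsup : ∀ ζ : ℂ, A ≤ ζ.re → ζ.re ≤ B → ‖Δ ζ‖ ≤ 2 ^ m * N * W := by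
    intro ζ h1 h2
    have h3 := weight_sup B m hm hB
    have h4 : |B| ≤ ‖(B : ℂ) + ζ.im * I‖ := by
      have := Complex.abs_re_le_norm ((B : ℂ) + ζ.im * I)
      simpa using this
    have hB0 : 0 < |B| := abs_pos.mpr (by linarith)
    calc ‖Δ ζ‖ ≤ N * (1 / ‖(B : ℂ) + ζ.im * I‖ ^ m) := hsharp ζ h1 h2
      _ ≤ N * (1 / |B| ^ m) := by gcongr
      _ ≤ N * (2 ^ m * W) := by gcongr
      _ = _ := by ring
  have hline : ∀ c : ℝ, A ≤ c → c ≤ B → ∫ y : ℝ, ‖Δ ((c : ℂ) + y * I)‖ ≤ N * W := by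
    intro c h1 h2
    rw [hW, ← MeasureTheory.integral_const_mul]
    refine MeasureTheory.integral_mono (hgood.intLine h1 h2).norm
      ((weight_int B m hm hB).const_mul N) fun y => ?_
    have := hsharp ((c : ℂ) + y * I) (by simpa using h1) (by simpa using h2)
    simpa using this
  -- position of the line of integration
  set r := L / (d + L) with hr
  have hr0 : 0 < r := by positivity
  have hrL : (d + L) * r = L := by rw [hr]; field_simp
  have hr1 : r < 1 := by rw [hr, div_lt_one (by positivity)]; linarith
  let cc : ℝ → ℝ := fun x => x - (x - A) * r
  have cc1 : ∀ x, A < x → cc x < x := by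
    intro x hx
    have := mul_pos (sub_pos.mpr hx) hr0
    simp only [cc]; linarith
  have cc2 : ∀ x, x < B + L → x - L < cc x := by
    intro x hx
    have : (x - A) * r < (d + L) * r := by gcongr; linarith
    simp only [cc]; linarith
  have cc3 : ∀ x, A ≤ x → A ≤ cc x := by
    intro x hx
    have := mul_nonneg (sub_nonneg.mpr hx) (sub_nonneg.mpr hr1.le)
    simp only [cc]; nlinarith
  have cc4 : ∀ x, x ≤ B + L → cc x ≤ B := by
    intro x hx
    have := mul_nonneg (sub_nonneg.mpr hx) (sub_nonneg.mpr hr1.le)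
    simp only [cc]; nlinarith
  let Φ : ℂ → ℂ := fun ζ => α * JJ τ Δ (cc ζ.re) ζ
  have hΦd : ∀ ζ : ℂ, A < ζ.re → ζ.re < B + L → DifferentiableAt ℂ Φ ζ := by
    intro ζ h1 h2
    have hA' := cc3 _ h1.le
    have hB' := cc4 _ h2.le
    have q1 := cc1 _ h1
    have q2 := cc2 _ h2
    have hJ := (JJ_diff hgood τ hτ hA' hB' ζ q1 (by rw [← hL]; linarith)).const_mul α
    refine hJ.congr_of_eventuallyEq ?_
    have o1 : IsOpen {η : ℂ | A < η.re ∧ η.re < B + L} :=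
      (isOpen_lt continuous_const continuous_re).inter (isOpen_lt continuous_re continuous_const)
    have o2 : IsOpen {η : ℂ | cc ζ.re < η.re ∧ η.re < cc ζ.re + L} :=
      (isOpen_lt continuous_const continuous_re).inter (isOpen_lt continuous_re continuous_const)
    filter_upwards [o1.mem_nhds ⟨h1, h2⟩, o2.mem_nhds ⟨q1, by linarith⟩] with η k1 k2
    simp only [Φ]
    congr 1
    exact JJ_same hgood τ hτ (cc3 _ k1.1.le) (cc4 _ k1.2.le) hA' hB' η
      (cc2 _ k1.2) (cc1 _ k1.1) (by rw [← hL]; linarith [k2.2]) k2.1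
  have hper : ∀ w : ℂ, EE τ (w - lam) = EE τ w := by
    intro w
    unfold EE
    have : (w - lam) / τ = w / τ + 2 * Real.pi * I := by rw [hlam]; field_simp; ring
    rw [this, Complex.exp_periodic]
  have hJper : ∀ c ζ, JJ τ Δ c (ζ + lam) = JJ τ Δ c ζ := by
    intro c ζ
    unfold JJ
    simp_rw [← sub_sub, hper]
  have hΦj : ∀ ζ : ℂ, A < ζ.re → ζ.re < B → Φ (ζ + lam) - Φ ζ = Δ ζ := by
    intro ζ h1 h2
    have e : (ζ + lam).re = ζ.re + L := by rw [add_re, hlre]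
    simp only [Φ]
    rw [hJper, e, ← mul_sub]
    have b1 := cc1 (ζ.re + L) (by linarith)
    have b2 := cc2 (ζ.re + L) (by linarith)
    have a1 := cc1 ζ.re h1
    have a2 := cc2 ζ.re (by linarith)
    rw [JJ_jump hgood τ hτ (cc3 _ h1.le) (cc4 _ (by linarith)) ζ a2 a1 (by linarith) b1, hα,
      inv_mul_cancel_left₀ hα0]
  have hΦb : ∀ ζ : ℂ, A + L / 2 ≤ ζ.re → ζ.re ≤ B + L / 2 → ‖Φ ζ‖ ≤ ‖α‖ * κ⁻¹ * N * W := by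
    intro ζ h1 h2
    have hA' := cc3 ζ.re (by linarith)
    have hB' := cc4 ζ.re (by linarith)
    have l1 : L / 2 * r ≤ (ζ.re - A) * r := by gcongr; linarith
    have l2 : (ζ.re - A) * r ≤ (d + L / 2) * r := by gcongr; linarith
    have hJ := JJ_norm hgood τ hA' hB' ζ κ hκ (by
      intro y
      have e : ((cc ζ.re : ℂ) + y * I - ζ).re = -((ζ.re - A) * r) := by simp [cc]
      have e2 : |-((ζ.re - A) * r)| = (ζ.re - A) * r := by
        rw [abs_neg, abs_of_nonneg (by nlinarith)]
      apply hbκ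
      · rw [e, e2]; exact l1
      · rw [e, e2]; linarith)
    simp only [Φ]
    rw [norm_mul]
    calc ‖α‖ * ‖JJ τ Δ (cc ζ.re) ζ‖ ≤ ‖α‖ * (κ⁻¹ * (N * W)) := by
          gcongr
          refine hJ.trans ?_
          have := hline _ hA' hB'
          gcongr
      _ = _ := by ring
  let φ : ℂ → ℂ := fun ζ => if ζ.re ≤ A then Φ (ζ + lam) - Δ ζ
    else if B + L ≤ ζ.re then Φ (ζ - lam) + Δ (ζ - lam) else Φ ζ
  have hφΦ : ∀ ζ : ℂ, A < ζ.re → ζ.re < B + L → φ ζ = Φ ζ := by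
    intro ζ h1 h2
    simp only [φ]
    rw [if_neg (not_le.mpr h1), if_neg (not_le.mpr h2)]
  have hφl : ∀ ζ : ℂ, A ≤ ζ.re → ζ.re < B → φ ζ = Φ (ζ + lam) - Δ ζ := by
    intro ζ h1 h2
    rcases h1.eq_or_lt with h | h
    · simp only [φ]; rw [if_pos h.ge]
    · rw [hφΦ ζ h (by linarith), ← hΦj ζ h h2]; ring
  have hφr : ∀ ζ : ℂ, A + L < ζ.re → ζ.re ≤ B + L → φ ζ = Φ (ζ - lam) + Δ (ζ - lam) := by
    intro ζ h1 h2
    rcases h2.eq_or_lt with h | h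
    · simp only [φ]; rw [if_neg (by linarith), if_pos h.ge]
    · have e : (ζ - lam).re = ζ.re - L := by rw [sub_re, hlre]
      rw [hφΦ ζ (by linarith) h, ← hΦj (ζ - lam) (by linarith) (by linarith), sub_add_cancel]
      ring
  have hφd : ∀ ζ : ℂ, A < ζ.re → ζ.re < B + L → DifferentiableAt ℂ φ ζ := by
    intro ζ h1 h2
    refine (hΦd ζ h1 h2).congr_of_eventuallyEq ?_
    have o1 : IsOpen {η : ℂ | A < η.re ∧ η.re < B + L} :=
      (isOpen_lt continuous_const continuous_re).inter (isOpen_lt continuous_re continuous_const)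
    filter_upwards [o1.mem_nhds ⟨h1, h2⟩] with η k
    exact hφΦ η k.1 k.2
  refine ⟨φ, ?_, ?_, ?_, ?_⟩
  · rintro ζ ⟨h1, h2⟩
    by_cases hl : ζ.re < B
    · have hcw : ContinuousWithinAt (fun η => Φ (η + lam) - Δ η)
          {η : ℂ | A ≤ η.re ∧ η.re < B} ζ := by
        refine ContinuousWithinAt.sub ?_ ((hc ζ ⟨h1, hl.le⟩).mono fun η hη => ⟨hη.1, hη.2.le⟩)
        have hΦc : ContinuousAt Φ (ζ + lam) := (hΦd (ζ + lam) (by rw [add_re, hlre]; linarith)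
          (by rw [add_re, hlre]; linarith)).continuousAt
        exact (ContinuousAt.comp (f := fun η : ℂ => η + lam) hΦc (by fun_prop)).continuousWithinAt
      have hcφ : ContinuousWithinAt φ {η : ℂ | A ≤ η.re ∧ η.re < B} ζ :=
        hcw.congr (fun η hη => hφl η hη.1 hη.2) (hφl ζ h1 hl)
      refine hcφ.mono_of_mem_nhdsWithin ?_
      filter_upwards [self_mem_nhdsWithin,
        mem_nhdsWithin_of_mem_nhds ((isOpen_lt continuous_re continuous_const).mem_nhds hl)]
        with η k1 k2
      exact ⟨k1.1, k2⟩
    · by_cases hr' : ζ.re < B + L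
      · exact (hφd ζ (by linarith) hr').continuousAt.continuousWithinAt
      · have hl' : A + L < ζ.re := by linarith
        have e : ∀ η : ℂ, (η - lam).re = η.re - L := by intro η; rw [sub_re, hlre]
        have hcw : ContinuousWithinAt (fun η => Φ (η - lam) + Δ (η - lam))
            {η : ℂ | A + L < η.re ∧ η.re ≤ B + L} ζ := by
          refine ContinuousWithinAt.add ?_ ?_
          · have hΦc : ContinuousAt Φ (ζ - lam) := (hΦd (ζ - lam) (by rw [e]; linarith)
              (by rw [e]; linarith)).continuousAt
            exact (ContinuousAt.comp (f := fun η : ℂ => η - lam) hΦc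
              (by fun_prop)).continuousWithinAt
          · refine ContinuousWithinAt.comp (f := fun η : ℂ => η - lam)
              (hc (ζ - lam) ⟨by rw [e]; linarith, by rw [e]; linarith⟩)
              (by fun_prop) ?_
            rintro η ⟨k1, k2⟩
            exact ⟨by rw [e]; linarith, by rw [e]; linarith⟩
        have hcφ : ContinuousWithinAt φ {η : ℂ | A + L < η.re ∧ η.re ≤ B + L} ζ :=
          hcw.congr (fun η hη => hφr η hη.1 hη.2) (hφr ζ hl' h2)
        refine hcφ.mono_of_mem_nhdsWithin ?_
        filter_upwards [self_mem_nhdsWithin,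
          mem_nhdsWithin_of_mem_nhds ((isOpen_lt continuous_const continuous_re).mem_nhds hl')]
          with η k1 k2
        exact ⟨k2, k1.2⟩
  · intro ζ hζ
    have hint : interior {ζ : ℂ | A ≤ ζ.re ∧ ζ.re ≤ B + L} =
        {ζ : ℂ | A < ζ.re ∧ ζ.re < B + L} := by
      have e1 : {ζ : ℂ | A ≤ ζ.re ∧ ζ.re ≤ B + L} = {ζ : ℂ | A ≤ ζ.re} ∩ {ζ : ℂ | ζ.re ≤ B + L} := rfl
      rw [e1, interior_inter, Complex.interior_setOfPred_le_re, Complex.interior_setOfPred_re_le]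
      rfl
    rw [hint] at hζ
    exact (hφd ζ hζ.1 hζ.2).differentiableWithinAt
  · intro ζ h1 h2
    have e : (ζ + lam).re = ζ.re + L := by rw [add_re, hlre]
    rcases h2.eq_or_lt with h | h
    · rw [hφr (ζ + lam) (by linarith) (by linarith), hφΦ ζ (by linarith) (by linarith),
        add_sub_cancel_right]
      ring
    · rw [hφl ζ h1 h, hφΦ (ζ + lam) (by linarith) (by linarith)]
      ring
  · intro ζ h1 h2
    have e1 : (ζ + lam).re = ζ.re + L := by rw [add_re, hlre]
    have e2 : (ζ - lam).re = ζ.re - L := by rw [sub_re, hlre]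
    have hnn : 0 ≤ 2 ^ m * N * W := by positivity
    have hfin : (‖α‖ * κ⁻¹ + 2 ^ m) * N * W = ‖α‖ * κ⁻¹ * N * W + 2 ^ m * N * W := by ring
    rw [hfin]
    by_cases hl : ζ.re < A + L / 2
    · rw [hφl ζ h1 (by linarith)]
      refine (norm_sub_le _ _).trans ?_
      have := hΦb (ζ + lam) (by linarith) (by linarith)
      have := hΔsup ζ h1 (by linarith)
      linarith
    · by_cases hr' : ζ.re ≤ B + L / 2
      · rw [hφΦ ζ (by linarith) (by linarith)]
        have := hΦb ζ (by linarith) hr'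
        linarith
      · rw [hφr ζ (by linarith) h2]
        refine (norm_add_le _ _).trans ?_
        have := hΦb (ζ - lam) (by linarith) (by linarith)
        have := hΔsup (ζ - lam) (by linarith) (by linarith)
        linarith
end
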